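/- Integrality and pole–zero pairing (Theorem 1.1(a) for tensor powers): all the reciprocal zeros α_i and reciprocal poles β_j are algebraic integers, and for each reciprocal pole β_j there exist an index i_j ∈ {1,...,R} and a positive integer m_j such that β_j = q^{m_j}·α_{i_j}. -/

import Mathlib

open scoped BigOperators Classical Pointwise

set_option maxHeartbeats 1000000
set_option synthInstance.maxHeartbeats 400000

noncomputable section

namespace HS

/-- A fixed algebraic closure of the prime field `F_p`. -/
abbrev Omg (p : ℕ) [Fact p.Prime] : Type := AlgebraicClosure (ZMod p)

/-- The absolute trace `Tr_{F_{p^d}/F_p}(y) = ∑_{j<d} y^{p^j}`, read back in `ZMod p`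
via the (injective) structure map `ZMod p → Omg p`. -/
def traceZmod (p : ℕ) [Fact p.Prime] (d : ℕ) (y : Omg p) : ZMod p :=
  Function.invFun (algebraMap (ZMod p) (Omg p)) (∑ j ∈ Finset.range d, y ^ p ^ j)

/-- Value of the Laurent monomial `x^μ`. -/
def mon {K : Type} [Field K] {n : ℕ} (x : Fin n → K) (μ : Fin n → ℤ) : K :=
  ∏ i, x i ^ μ i

/-- Value of the Laurent polynomial `Ḡ(x,t) = f̄(x) + P̄(x,t)`, where `f̄` and `P̄` are given
by their (finitely supported) coefficient functions: for `P̄`, the index `(μ, γ)` records the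
`x`-exponent `μ` and the `t`-exponent `γ`. -/
def Gval {K : Type} [Field K] {n s : ℕ} (f : (Fin n → ℤ) →₀ K)
    (P : ((Fin n → ℤ) × (Fin s → ℤ)) →₀ K) (x : Fin n → K) (t : Fin s → K) : K :=
  (f.sum fun μ c => c * mon x μ) + P.sum fun gm c => c * mon x gm.1 * mon t gm.2

/-- View an integral exponent vector as a real vector. -/
def toR {n : ℕ} (u : Fin n → ℤ) : Fin n → ℝ := fun i => (u i : ℝ)

/-- The Newton polyhedron at infinity `Δ_∞(f̄)`: convex hull of the origin and the
exponent vectors of the monomials of `f̄`. -/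
def NewtonPoly {K : Type} [Field K] {n : ℕ} (f : (Fin n → ℤ) →₀ K) : Set (Fin n → ℝ) :=
  convexHull ℝ (insert 0 (toR '' (f.support : Set (Fin n → ℤ))))

/-- The value at `x` of `x_i ∂f̄^σ/∂x_i`, where `f̄^σ` is the sum of the terms of `f̄`
whose exponent vector lies in the face `σ`. -/
def faceSum {K : Type} [Field K] {n : ℕ} (f : (Fin n → ℤ) →₀ K) (σ : Set (Fin n → ℝ))
    (i : Fin n) (x : Fin n → K) : K :=
  ∑ μ ∈ f.support.filter (fun μ => toR μ ∈ σ), (μ i : K) * f μ * mon x μ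

/-- Nondegeneracy of `f̄` with respect to its Newton polyhedron at infinity: for every
closed face (= exposed subset) not containing the origin, the logarithmic partials of
`f̄^σ` have no common zero with all coordinates nonzero. -/
def Nondeg {K : Type} [Field K] {n : ℕ} (f : (Fin n → ℤ) →₀ K) : Prop :=
  ∀ σ : Set (Fin n → ℝ), IsExposed ℝ (NewtonPoly f) σ → σ.Nonempty → (0 : Fin n → ℝ) ∉ σ →
    ¬ ∃ x : Fin n → K, (∀ i, x i ≠ 0) ∧ ∀ i, faceSum f σ i x = 0

/-- The relative polytope `Γ`: convex hull of the origin and the points `(1/(1-w(μ)))•γ`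
for `(μ,γ)` running over the exponents of `P̄`; here `w` is the gauge of `Δ_∞(f̄)`. -/
def relPoly {K : Type} [Field K] {n s : ℕ} (f : (Fin n → ℤ) →₀ K)
    (P : ((Fin n → ℤ) × (Fin s → ℤ)) →₀ K) : Set (Fin s → ℝ) :=
  convexHull ℝ (insert 0 ((fun gm : (Fin n → ℤ) × (Fin s → ℤ) =>
    (1 - gauge (NewtonPoly f) (toR gm.1))⁻¹ • toR gm.2) '' (P.support : Set _)))

/-- Dimension of the smallest linear subspace containing a set. -/
def dimSpan {s : ℕ} (Γ : Set (Fin s → ℝ)) : ℕ :=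
  Module.finrank ℝ (Submodule.span ℝ Γ)

/-- The lattice-normalized `d`-dimensional volume of a rational polytope `Γ`, defined
(Ehrhart-style) as `lim_{m→∞} #(mΓ ∩ ℤ^s)/m^d`.  When `d` is the dimension of the span of
`Γ`, this is the volume of `Γ` computed in that span with respect to the Haar measure
normalized so that a fundamental domain of the lattice has volume 1. -/
def latticeVol {s : ℕ} (Γ : Set (Fin s → ℝ)) (d : ℕ) : ℝ :=
  Filter.limUnder Filter.atTop fun m : ℕ =>
    (Nat.card {u : Fin s → ℤ // toR u ∈ (m : ℝ) • Γ} : ℝ) / (m : ℝ) ^ d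

/-- The cone over a set: union of the rays from the origin through its points. -/
def coneOf {s : ℕ} (Γ : Set (Fin s → ℝ)) : Set (Fin s → ℝ) :=
  {v | ∃ c : ℝ, 0 ≤ c ∧ ∃ γ ∈ Γ, v = c • γ}

/-- `w(Γ) = min { w_Γ(u) : u ∈ ℤ^s ∩ Cone(Γ), all coordinates of u ≥ 1 }`,
where `w_Γ` is the gauge of `Γ`. -/
def wMin {s : ℕ} (Γ : Set (Fin s → ℝ)) : ℝ :=
  sInf {r : ℝ | ∃ u : Fin s → ℤ, (∀ i, (1 : ℤ) ≤ u i) ∧ toR u ∈ coneOf Γ ∧ r = gauge Γ (toR u)}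

/-- The cyclotomic field `ℚ(ζ)` inside `ℂ`. -/
def cyclo (ζ : ℂ) : Subfield ℂ := Subfield.closure {ζ}

/-- The toric exponential sum `∑_{x ∈ (F_{p^d}^×)^n} Θ(Tr(Ḡ(x,t)))`. -/
def torSum (p : ℕ) [Fact p.Prime] {n s : ℕ} (Θ : AddChar (ZMod p) ℂ)
    (f : (Fin n → ℤ) →₀ Omg p) (P : ((Fin n → ℤ) × (Fin s → ℤ)) →₀ Omg p)
    (d : ℕ) (t : Fin s → Omg p) : ℂ :=
  ∑ᶠ (x : Fin n → Omg p) (_ : ∀ i, x i ^ p ^ d = x i ∧ x i ≠ 0),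
    Θ (traceZmod p d (Gval f P x t))

/-- `N_m` for the `k`-th tensor power family over the torus `G_m^s`. -/
def Ntor (p a : ℕ) [Fact p.Prime] {n s : ℕ} (Θ : AddChar (ZMod p) ℂ)
    (f : (Fin n → ℤ) →₀ Omg p) (P : ((Fin n → ℤ) × (Fin s → ℤ)) →₀ Omg p)
    (k m : ℕ) : ℂ :=
  ∑ᶠ (t : Fin s → Omg p) (_ : ∀ j, t j ^ p ^ (a * m) = t j ∧ t j ≠ 0),
    ((-1 : ℂ) ^ n * torSum p Θ f P (a * m) t) ^ k

/-- `N_m` for the `k`-th tensor power family over the affine base `A^s`. -/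
def Naff (p a : ℕ) [Fact p.Prime] {n s : ℕ} (Θ : AddChar (ZMod p) ℂ)
    (f : (Fin n → ℤ) →₀ Omg p) (P : ((Fin n → ℤ) × (Fin s → ℤ)) →₀ Omg p)
    (k m : ℕ) : ℂ :=
  ∑ᶠ (t : Fin s → Omg p) (_ : ∀ j, t j ^ p ^ (a * m) = t j),
    ((-1 : ℂ) ^ n * torSum p Θ f P (a * m) t) ^ k

/-- The `𝔭`-adic valuation of an algebraic number `x` lying in the ring of integers of a
subfield `F ⊆ ℂ`: the largest `t` with `x ∈ 𝔭^t`. -/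
def ordIn (F : Subfield ℂ) (Pid : Ideal (NumberField.RingOfIntegers F)) (x : ℂ) : ℕ :=
  sSup {t : ℕ | ∃ y : NumberField.RingOfIntegers F,
    ((algebraMap (NumberField.RingOfIntegers F) F y : F) : ℂ) = x ∧ y ∈ Pid ^ t}

/-- The `𝔭`-adic valuation on a subring of `ℂ`. -/
def ordSub (R0 : Subring ℂ) (Pid : Ideal R0) (x : ℂ) : ℕ :=
  sSup {t : ℕ | ∃ y : R0, (y : ℂ) = x ∧ y ∈ Pid ^ t}

/-- The degree `[F_q(λ):F_q]` of a point `λ ∈ F̄_q^s`, where `q = p^a`. -/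
def degOf (p a : ℕ) [Fact p.Prime] {s : ℕ} (lam : Fin s → Omg p) : ℕ :=
  sInf {d : ℕ | 0 < d ∧ ∀ j, lam j ^ p ^ (a * d) = lam j}

open PowerSeries in
/-- `A` has constant term one and `-T A'/A = ∑ v_m T^m`. -/
def LD {K : Type*} [Field K] (v : ℕ → K) (A : PowerSeries K) : Prop :=
  coeff 0 A = 1 ∧ X * PowerSeries.derivative K A = - (mk (fun m => if m = 0 then 0 else v m)) * A

open PowerSeries in
theorem LD.rec' {K : Type*} [Field K] {v : ℕ → K} {A : PowerSeries K} (h : LD v A) (r : ℕ) :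
    (r + 1 : K) * coeff (r+1) A = - ∑ i ∈ Finset.range (r+1), v (i+1) * coeff (r - i) A := by
  have h2 := congrArg (coeff (r+1)) h.2
  rw [mul_comm X, PowerSeries.coeff_succ_mul_X, coeff_derivative, neg_mul, map_neg, coeff_mul,
    Finset.Nat.antidiagonal_succ, Finset.sum_cons, Finset.sum_map,
    Finset.Nat.sum_antidiagonal_eq_sum_range_succ_mk] at h2
  simp only [coeff_mk] at h2
  rw [mul_comm, h2]
  simp

open PowerSeries in
theorem LD.congr {K : Type*} [Field K] {v w : ℕ → K} {A : PowerSeries K} (h : LD v A)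
    (hvw : ∀ m, 1 ≤ m → v m = w m) : LD w A := by
  refine ⟨h.1, h.2.trans ?_⟩
  congr 2; ext m
  simp only [coeff_mk]
  split_ifs with hm
  · rfl
  · exact hvw m (by omega)

open PowerSeries in
theorem LD.mul {K : Type*} [Field K] {v w : ℕ → K} {A B : PowerSeries K}
    (h : LD v A) (h' : LD w B) : LD (fun m => v m + w m) (A * B) := by
  refine ⟨?_, ?_⟩
  · have h1 := h.1
    have h2 := h'.1
    rw [coeff_zero_eq_constantCoeff_apply] at *
    rw [map_mul, h1, h2, mul_one]
  have e : (mk (fun m => if m = 0 then 0 else v m + w m) : PowerSeries K) =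
    mk (fun m => if m = 0 then 0 else v m) + mk (fun m => if m = 0 then 0 else w m) := by
    ext m; simp only [coeff_mk, map_add]; split_ifs <;> simp
  rw [e, Derivation.leibniz, smul_eq_mul, smul_eq_mul]
  linear_combination A * h'.2 + B * h.2

open PowerSeries in
theorem LD.one {K : Type*} [Field K] : LD (fun _ => (0:K)) (1 : PowerSeries K) := by
  refine ⟨by simp, ?_⟩
  have : (mk (fun m => if m = 0 then 0 else 0) : PowerSeries K) = 0 := by ext; simp
  rw [this]; simp

theorem LD.prod {K : Type*} [Field K] {ι : Type*} (s : Finset ι) {v : ι → ℕ → K}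
    {A : ι → PowerSeries K} (h : ∀ i ∈ s, LD (v i) (A i)) :
    LD (fun m => ∑ i ∈ s, v i m) (∏ i ∈ s, A i) := by
  induction s using Finset.induction_on with
  | empty => simpa using LD.one
  | insert a s ha ih =>
    rw [Finset.prod_insert ha]
    simp_rw [Finset.sum_insert ha]
    exact (h a (by simp)).mul (ih fun i hi => h i (by simp [hi]))

theorem LD.pow {K : Type*} [Field K] {v : ℕ → K} {A : PowerSeries K} (h : LD v A) (n : ℕ) :
    LD (fun m => n * v m) (A ^ n) := by
  have := LD.prod (Finset.range n) (v := fun _ => v) (A := fun _ => A) (fun _ _ => h)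
  simpa using this

open PowerSeries in
theorem LD.one_sub {K : Type*} [Field K] (c : K) :
    LD (fun m => c ^ m) (1 - C c * X : PowerSeries K) := by
  refine ⟨by simp [coeff_zero_eq_constantCoeff_apply], ?_⟩
  have : (mk (fun m => if m = 0 then 0 else c ^ m) : PowerSeries K) * (1 - C c * X) = C c * X := by
    ext m
    rw [mul_sub, mul_one, map_sub, mul_left_comm, coeff_C_mul, coeff_C_mul, coeff_mk]
    rcases m with _ | m
    · simp
    · rw [coeff_succ_mul_X, coeff_mk, coeff_X]
      rcases m with _ | m
      · simp
      · simp [pow_succ]; ring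
  rw [neg_mul, this, map_sub, Derivation.leibniz]
  simp
  ring

open PowerSeries in
theorem LD.unique {K : Type*} [Field K] [CharZero K] {v : ℕ → K} {A B : PowerSeries K}
    (h : LD v A) (h' : LD v B) : A = B := by
  ext r
  induction r using Nat.strong_induction_on with
  | _ r ih =>
    rcases r with _ | r
    · rw [h.1, h'.1]
    · have e1 := h.rec' r
      have e2 := h'.rec' r
      have : (r + 1 : K) ≠ 0 := by exact_mod_cast Nat.succ_ne_zero r
      apply mul_left_cancel₀ this
      rw [e1, e2]
      congr 1
      refine Finset.sum_congr rfl fun i hi => ?_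
      rw [ih (r - i) (by omega)]

def Eseq {K : Type*} [Field K] (v : ℕ → K) : ℕ → K
  | 0 => 1
  | r + 1 => - (∑ i : Fin (r+1), v (i+1) * Eseq v (r - i)) / (r+1)

open PowerSeries in
theorem LD.exists' {K : Type*} [Field K] [CharZero K] (v : ℕ → K) : LD v (mk (Eseq v)) := by
  refine ⟨by simp [Eseq], ?_⟩
  ext r
  rcases r with _ | r
  · simp
  rw [mul_comm X, PowerSeries.coeff_succ_mul_X, coeff_derivative, neg_mul, map_neg, coeff_mul,
    Finset.Nat.antidiagonal_succ, Finset.sum_cons, Finset.sum_map,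
    Finset.Nat.sum_antidiagonal_eq_sum_range_succ_mk]
  simp only [coeff_mk]
  have : (r + 1 : K) ≠ 0 := by exact_mod_cast Nat.succ_ne_zero r
  rw [Eseq, div_mul_cancel₀ _ this, Fin.sum_univ_eq_sum_range (fun i => v (i+1) * Eseq v (r - i))]
  simp

open PowerSeries in
theorem LD.rescale {K : Type*} [Field K] {v : ℕ → K} {A : PowerSeries K} (h : LD v A) (c : K) :
    LD (fun m => c ^ m * v m) (PowerSeries.rescale c A) := by
  refine ⟨by simp [h.1, -coeff_zero_eq_constantCoeff], ?_⟩
  have h2 := congrArg (PowerSeries.rescale c) h.2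
  have e1 : (mk (fun m => if m = 0 then 0 else c ^ m * v m) : PowerSeries K) =
    PowerSeries.rescale c (mk (fun m => if m = 0 then 0 else v m)) := by
    ext m; simp
  have e2 : X * PowerSeries.derivative K (PowerSeries.rescale c A) =
    PowerSeries.rescale c (X * PowerSeries.derivative K A) := by
    ext m
    rcases m with _ | m
    · simp
    rw [coeff_rescale, mul_comm X, mul_comm X, PowerSeries.coeff_succ_mul_X,
      PowerSeries.coeff_succ_mul_X, coeff_derivative, coeff_derivative, coeff_rescale]
    ring
  rw [e1, e2, h2, map_mul, map_neg]

open PowerSeries in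
theorem LD.expand {K : Type*} [Field K] {v : ℕ → K} {A : PowerSeries K} (h : LD v A) (p : ℕ)
    (hp : p ≠ 0) :
    LD (fun m => if p ∣ m then p * v (m / p) else 0) (PowerSeries.expand p hp A) := by
  refine ⟨?_, ?_⟩
  · have := h.1
    rw [coeff_zero_eq_constantCoeff_apply] at *
    rw [constantCoeff_expand, this]
  have h2 := congrArg (PowerSeries.expand p hp) h.2
  have e1 : (mk (fun m => if m = 0 then 0 else if p ∣ m then p * v (m / p) else 0) : PowerSeries K) =
    C (p : K) * PowerSeries.expand p hp (mk (fun m => if m = 0 then 0 else v m)) := by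
    ext m
    rw [coeff_C_mul, coeff_expand, coeff_mk, coeff_mk]
    by_cases hm : m = 0
    · simp [hm]
    by_cases hd : p ∣ m
    · have : m / p ≠ 0 := by
        obtain ⟨k, rfl⟩ := hd
        rw [Nat.mul_div_cancel_left _ (Nat.pos_of_ne_zero hp)]
        rintro rfl; simp at hm
      have : ¬ m < p := by
        intro hlt; exact this (Nat.div_eq_of_lt hlt)
      simp [hm, hd, this, hp]
    · simp [hm, hd]
  have e2 : X * PowerSeries.derivative K (PowerSeries.expand p hp A) =
    C (p : K) * PowerSeries.expand p hp (X * PowerSeries.derivative K A) := by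
    ext m
    rw [coeff_C_mul, coeff_expand]
    rcases m with _ | m
    · simp
    rw [mul_comm X, PowerSeries.coeff_succ_mul_X, coeff_derivative, coeff_expand]
    split_ifs with hd
    · obtain ⟨k, hk⟩ := hd
      rw [hk, Nat.mul_div_cancel_left _ (Nat.pos_of_ne_zero hp)]
      have hm : (m : K) + 1 = p * k := by
        have := congrArg (Nat.cast : ℕ → K) hk
        push_cast at this; exact this
      rw [hm]
      rcases k with _ | k
      · simp at hk
      rw [mul_comm X, PowerSeries.coeff_succ_mul_X, coeff_derivative]
      push_cast
      ring
    · simp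
  rw [e1, e2, h2, map_mul, map_neg]
  ring

open PowerSeries Filter in
theorem LD.tendsto {K : Type*} [NormedField K] [CharZero K] {v : ℕ → K} {A : PowerSeries K}
    (h : LD v A) {w : ℕ → ℕ → K} {B : ℕ → PowerSeries K} (hB : ∀ M, LD (w M) (B M))
    (hw : ∀ m, 1 ≤ m → Tendsto (fun M => w M m) atTop (nhds (v m))) (r : ℕ) :
    Tendsto (fun M => coeff r (B M)) atTop (nhds (coeff r A)) := by
  induction r using Nat.strong_induction_on with
  | _ r ih =>
    rcases r with _ | r
    · simp only [h.1, (hB _).1]; exact tendsto_const_nhds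
    · have h0 : (r + 1 : K) ≠ 0 := by exact_mod_cast Nat.succ_ne_zero r
      have e1 : ∀ M, coeff (r+1) (B M) = (r+1 : K)⁻¹ *
          - ∑ i ∈ Finset.range (r+1), w M (i+1) * coeff (r - i) (B M) := by
        intro M; rw [← (hB M).rec' r, inv_mul_cancel_left₀ h0]
      have e2 : coeff (r+1) A = (r+1 : K)⁻¹ *
          - ∑ i ∈ Finset.range (r+1), v (i+1) * coeff (r - i) A := by
        rw [← h.rec' r, inv_mul_cancel_left₀ h0]
      simp only [e1, e2]
      refine Tendsto.const_mul _ (Tendsto.neg (tendsto_finsetSum _ fun i hi => ?_))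
      exact (hw _ (by omega)).mul (ih _ (by omega))

open PowerSeries in
theorem LD.bound {K : Type*} [NormedField K] [CharZero K] [IsUltrametricDist K]
    {v : ℕ → K} {A : PowerSeries K}
    (h : LD v A) {δ : ℝ} (hδ : 0 ≤ δ) (hv : ∀ m, 1 ≤ m → ‖v m‖ ≤ δ ^ m) (r : ℕ) :
    ‖(r.factorial : K) * coeff r A‖ ≤ δ ^ r := by
  induction r using Nat.strong_induction_on with
  | _ r ih =>
    rcases r with _ | r
    · simp [h.1, -coeff_zero_eq_constantCoeff]
    · have : ((r+1).factorial : K) * coeff (r+1) A =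
        - ∑ i ∈ Finset.range (r+1), (r.factorial : K) * (v (i+1) * coeff (r - i) A) := by
        rw [Nat.factorial_succ, ← Finset.mul_sum, ← mul_neg, ← h.rec' r]; push_cast; ring
      rw [this, norm_neg]
      refine IsUltrametricDist.norm_sum_le_of_forall_le_of_nonneg (by positivity) fun i hi => ?_
      have hi' : i ≤ r := by simp at hi; omega
      obtain ⟨k, hk⟩ := Nat.factorial_dvd_factorial (show r - i ≤ r by omega)
      have e : (r.factorial : K) * (v (i+1) * coeff (r - i) A) =
         (k : K) * v (i+1) * (((r-i).factorial : K) * coeff (r-i) A) := by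
        rw [hk]; push_cast; ring
      rw [e, norm_mul, norm_mul]
      have hk1 : ‖(k : K)‖ ≤ 1 := IsUltrametricDist.norm_natCast_le_one K k
      calc _ ≤ 1 * δ ^ (i+1) * δ ^ (r - i) := by
            gcongr
            · exact hv _ (by omega)
            · exact ih _ (by omega)
        _ = δ ^ (r+1) := by rw [one_mul, ← pow_add]; congr 1; omega

theorem deriv_prod {K R : Type*} [CommRing K] [CommRing R] [Algebra K R] (D : Derivation K R R)
    {n : Type*} [DecidableEq n] (s : Finset n) (g : n → R) :
    D (∏ i ∈ s, g i) = ∑ i ∈ s, (∏ j ∈ s.erase i, g j) • D (g i) := by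
  induction s using Finset.induction_on with
  | empty => simp
  | insert a s ha ih =>
    rw [Finset.prod_insert ha, Derivation.leibniz, ih, Finset.sum_insert ha, Finset.erase_insert ha,
      add_comm, Finset.smul_sum]
    congr 1
    refine Finset.sum_congr rfl fun i hi => ?_
    have hia : i ≠ a := by rintro rfl; exact ha hi
    rw [Finset.erase_insert_of_ne hia.symm, Finset.prod_insert (by simp [ha]), smul_smul]

/-- Jacobi's formula. -/
theorem deriv_det {K R : Type*} [CommRing K] [CommRing R] [Algebra K R] (D : Derivation K R R)
    {n : Type*} [Fintype n] [DecidableEq n] (M : Matrix n n R) :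
    D M.det = (M.adjugate * M.map D).trace := by
  have h1 : (M.adjugate * M.map D).trace = ∑ i, (M.updateCol i (fun j => D (M j i))).det := by
    rw [Matrix.trace]
    refine Finset.sum_congr rfl fun i _ => ?_
    rw [← Matrix.cramer_apply, Matrix.cramer_eq_adjugate_mulVec]
    simp [Matrix.mul_apply, Matrix.mulVec, dotProduct]
  rw [h1]
  simp_rw [Matrix.det_apply]
  rw [map_sum, Finset.sum_comm]
  refine Finset.sum_congr rfl fun σ _ => ?_
  rw [← Finset.smul_sum]
  have : D (∏ i, M (σ i) i) = ∑ i, ∏ j, (M.updateCol i (fun j => D (M j i))) (σ j) j := by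
    rw [deriv_prod]
    refine Finset.sum_congr rfl fun i _ => ?_
    rw [← Finset.mul_prod_erase _ _ (Finset.mem_univ i), Matrix.updateCol_self, smul_eq_mul, mul_comm]
    congr 1
    refine Finset.prod_congr rfl fun j hj => ?_
    rw [Matrix.updateCol_ne (Finset.ne_of_mem_erase hj)]
  rw [← this]
  simp only [Units.smul_def, map_zsmul]

open PowerSeries in
theorem LD.matrix {K : Type*} [Field K] {n : Type*} [Fintype n] [DecidableEq n]
    (U : Matrix n n K) :
    LD (fun m => (U ^ m).trace)
      (Matrix.det (1 - (X : PowerSeries K) • U.map (C : K →+* PowerSeries K))) := by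
  set M : Matrix n n (PowerSeries K) := 1 - (X : PowerSeries K) • U.map (C : K →+* PowerSeries K) with hM
  refine ⟨?_, ?_⟩
  · rw [coeff_zero_eq_constantCoeff_apply, RingHom.map_det]
    have : (constantCoeff : PowerSeries K →+* K).mapMatrix M = 1 := by
      ext i j; simp [hM, Matrix.one_apply]
    rw [this, Matrix.det_one]
  obtain ⟨G, hG⟩ : ∃ G : Matrix n n (PowerSeries K), ∀ i j m, coeff m (G i j) = (U ^ m) i j :=
    ⟨Matrix.of fun i j => mk (fun m => (U ^ m) i j), by simp⟩
  have hMG : M * G = 1 := by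
    ext i j m
    rw [hM, sub_mul, one_mul, smul_mul_assoc, Matrix.sub_apply, Matrix.smul_apply, smul_eq_mul, map_sub]
    rcases m with _ | m
    · rw [hG]; simp [Matrix.one_apply]
    · rw [mul_comm X, coeff_succ_mul_X]
      simp only [hG, Matrix.mul_apply, Matrix.map_apply, map_sum, coeff_C_mul]
      rw [pow_succ', Matrix.mul_apply, sub_self, Matrix.one_apply]
      split_ifs <;> simp [coeff_one]
  have hadj : M.adjugate = M.det • G := by
    calc M.adjugate = M.adjugate * (M * G) := by rw [hMG, mul_one]
      _ = _ := by rw [← mul_assoc, Matrix.adjugate_mul, smul_mul_assoc, one_mul]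
  have hD : M.map (PowerSeries.derivative K) = - U.map (C : K →+* PowerSeries K) := by
    ext1 i j
    simp only [hM, Matrix.map_apply, Matrix.sub_apply, Matrix.smul_apply, Matrix.neg_apply, map_sub,
      smul_eq_mul, Derivation.leibniz, derivative_C, derivative_X]
    have : PowerSeries.derivative K ((1 : Matrix n n (PowerSeries K)) i j) = 0 := by
      rw [Matrix.one_apply]; split_ifs <;> simp
    rw [this]; simp
  rw [deriv_det, hadj, hD, smul_mul_assoc, Matrix.trace_smul, smul_eq_mul, mul_neg, Matrix.trace_neg]
  have : X * (G * U.map (C : K →+* PowerSeries K)).trace =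
      mk (fun m => if m = 0 then 0 else (U ^ m).trace) := by
    ext m
    rcases m with _ | m
    · simp
    rw [mul_comm, coeff_succ_mul_X, coeff_mk, if_neg (Nat.succ_ne_zero m), Matrix.trace, Matrix.trace,
      map_sum]
    refine Finset.sum_congr rfl fun i _ => ?_
    simp only [Matrix.diag_apply, Matrix.mul_apply, map_sum, pow_succ, hG, Matrix.map_apply,
      coeff_mul_C]
  rw [← this]; ring

/-- absolutely convergent at `1` -/
def SN {K : Type*} [NormedField K] (f : PowerSeries K) : Prop :=
  Summable fun n => ‖PowerSeries.coeff n f‖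

def ev {K : Type*} [NormedField K] (f : PowerSeries K) : K := ∑' n, PowerSeries.coeff n f

theorem SN.mul {K : Type*} [NormedField K] {f g : PowerSeries K} (hf : SN f) (hg : SN g) :
    SN (f * g) := by
  have := summable_norm_sum_mul_antidiagonal_of_summable_norm hf hg
  unfold SN
  simpa only [PowerSeries.coeff_mul] using this

theorem ev_mul {K : Type*} [NormedField K] [CompleteSpace K] {f g : PowerSeries K}
    (hf : SN f) (hg : SN g) : ev (f * g) = ev f * ev g := by
  have := tsum_mul_tsum_eq_tsum_sum_antidiagonal_of_summable_norm hf hg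
  unfold ev
  simp only [PowerSeries.coeff_mul]
  exact this.symm

theorem SN.one {K : Type*} [NormedField K] : SN (1 : PowerSeries K) := by
  refine summable_of_ne_finset_zero (s := {0}) fun n hn => ?_
  simp only [Finset.mem_singleton] at hn
  simp [PowerSeries.coeff_one, hn]

theorem ev_one {K : Type*} [NormedField K] : ev (1 : PowerSeries K) = 1 := by
  unfold ev
  rw [tsum_eq_single 0]
  · simp
  · intro n hn; simp [PowerSeries.coeff_one, hn]

open PowerSeries in
theorem SN.one_sub {K : Type*} [NormedField K] (c : K) : SN (1 - C c * X : PowerSeries K) := by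
  refine summable_of_ne_finset_zero (s := {0, 1}) fun n hn => ?_
  simp only [Finset.mem_insert, Finset.mem_singleton, not_or] at hn
  simp [PowerSeries.coeff_one, coeff_X, hn]

open PowerSeries in
theorem ev_one_sub {K : Type*} [NormedField K] (c : K) : ev (1 - C c * X : PowerSeries K) = 1 - c := by
  unfold ev
  rw [tsum_eq_sum (s := {0, 1})]
  · simp [PowerSeries.coeff_one, coeff_X, sub_eq_add_neg]
  · intro n hn
    simp only [Finset.mem_insert, Finset.mem_singleton, not_or] at hn
    simp [PowerSeries.coeff_one, coeff_X, hn]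

theorem SN.prod {K : Type*} [NormedField K] [CompleteSpace K] {ι : Type*} (s : Finset ι)
    (f : ι → PowerSeries K)
    (hf : ∀ i ∈ s, SN (f i)) : SN (∏ i ∈ s, f i) ∧ ev (∏ i ∈ s, f i) = ∏ i ∈ s, ev (f i) := by
  induction s using Finset.induction_on with
  | empty => exact ⟨by simpa using SN.one, by simpa using ev_one⟩
  | insert a s ha ih =>
    obtain ⟨h1, h2⟩ := ih fun i hi => hf i (by simp [hi])
    rw [Finset.prod_insert ha, Finset.prod_insert ha]
    exact ⟨(hf a (by simp)).mul h1, by rw [ev_mul (hf a (by simp)) h1, h2]⟩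

theorem SN.pow {K : Type*} [NormedField K] [CompleteSpace K] {f : PowerSeries K} (hf : SN f) (n : ℕ) :
    SN (f ^ n) ∧ ev (f ^ n) = ev f ^ n := by
  have := SN.prod (Finset.range n) (fun _ => f) (fun _ _ => hf)
  simpa using this

theorem SN.of_bound {K : Type*} [NormedField K] {f : PowerSeries K} (B r : ℝ) (hr0 : 0 ≤ r) (hr : r < 1)
    (h : ∀ n, ‖PowerSeries.coeff n f‖ ≤ B * r ^ n) : SN f :=
  Summable.of_nonneg_of_le (fun _ => norm_nonneg _) h
    ((summable_geometric_of_lt_one hr0 hr).mul_left B)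

open PowerSeries in
theorem rescale_one_sub {K : Type*} [Field K] (t c : K) :
    PowerSeries.rescale t (1 - C c * X) = 1 - C (c * t) * X := by
  ext n
  rw [coeff_rescale]
  rcases n with _ | _ | n <;> simp [PowerSeries.coeff_one, coeff_X, mul_comm]

open PowerSeries in
theorem pole_lemma {K : Type*} [NormedField K] [CompleteSpace K] [CharZero K] [IsUltrametricDist K]
    (q : K) (hq0 : q ≠ 0) (hq1 : ‖q‖ < 1) (N : ℕ) (c : ℝ) (hc : 0 < c)
    (hfac : ∀ r : ℕ, 1 ≤ ‖(r.factorial : K)‖ * c ^ r)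
    (v : ℕ → K) (A : PowerSeries K) (hA : LD v A)
    (hent : ∀ ρ : ℝ, 0 < ρ → ∃ B, ∀ r, ‖coeff r A‖ * ρ ^ r ≤ B)
    (R S : ℕ) (α : Fin R → K) (β : Fin S → K)
    (hβ0 : ∀ j, β j ≠ 0)
    (hα1 : ∀ i, ‖α i‖ ≤ 1) (hβ1 : ∀ j, ‖β j‖ ≤ 1)
    (hred : ∀ i j, α i ≠ β j)
    (hps : ∀ m : ℕ, 1 ≤ m → ∑ i, α i ^ m - ∑ j, β j ^ m = (1 - q ^ m) ^ N * v m) (j : Fin S) :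
    ∃ (i : Fin R) (mj : ℕ), 0 < mj ∧ β j = q ^ mj * α i := by
  by_contra hcon
  push Not at hcon
  -- choose a minimal element in the orbit
  have hq0' : 0 < ‖q‖ := norm_pos_iff.mpr hq0
  obtain ⟨J0, hJ0⟩ := exists_pow_lt_of_lt_one (norm_pos_iff.mpr (hβ0 j)) hq1
  have hbd : ∀ m, (∃ j', β j = q ^ m * β j') → m ≤ J0 := by
    rintro m ⟨j', h⟩
    by_contra hm
    have h1 : ‖β j‖ ≤ ‖q‖ ^ m := by
      rw [h, norm_mul, norm_pow]
      exact mul_le_of_le_one_right (by positivity) (hβ1 j')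
    have h2 : ‖q‖ ^ m ≤ ‖q‖ ^ J0 := pow_le_pow_of_le_one hq0'.le hq1.le (by omega)
    linarith
  obtain ⟨m0, ⟨j1, hj1⟩, hmax⟩ : ∃ m0, (∃ j', β j = q ^ m0 * β j') ∧
      ∀ m, (∃ j', β j = q ^ m * β j') → m ≤ m0 := by
    refine ⟨Nat.findGreatest (fun m => ∃ j', β j = q ^ m * β j') J0, ?_, ?_⟩
    · exact Nat.findGreatest_spec (P := fun m => ∃ j', β j = q ^ m * β j') (Nat.zero_le J0) ⟨j, by simp⟩
    · intro m hm
      exact Nat.le_findGreatest (hbd m hm) hm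
  have hb : ∀ m j', β j1 = q ^ m * β j' → m = 0 := by
    intro m j' h
    have := hmax (m0 + m) ⟨j', by rw [hj1, h, pow_add, mul_assoc]⟩
    omega
  have ha : ∀ m i, β j1 ≠ q ^ m * α i := by
    intro m i h
    rcases Nat.eq_zero_or_pos (m0 + m) with h0 | h0
    · have : m = 0 := by omega
      subst this
      exact hred i j1 (by rw [h]; simp)
    · exact hcon i (m0 + m) h0 (by rw [hj1, h, pow_add, mul_assoc])
  clear hcon hmax hbd hJ0 hj1
  set b := β j1 with hbdef
  have hb0 : b ≠ 0 := hβ0 j1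
  have hbn : 0 < ‖b‖ := norm_pos_iff.mpr hb0
  obtain ⟨J, hJ⟩ := exists_pow_lt_of_lt_one (show 0 < ‖b‖ / c by positivity) hq1
  -- the Bezout polynomials
  obtain ⟨P, P', hPP⟩ : IsCoprime ((1 - Polynomial.X : Polynomial ℤ) ^ N) (Polynomial.X ^ (J+1)) := by
    apply IsCoprime.pow
    exact ⟨1, 1, by ring⟩
  have hP0 : P.coeff 0 = 1 := by
    have := congrArg (Polynomial.eval 0) hPP
    simp [← Polynomial.coeff_zero_eq_eval_zero] at this
    exact this
  -- error term
  let s : ℕ → K := fun m => ∑ i, α i ^ m - ∑ j, β j ^ m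
  let w : ℕ → K := fun m => v m - s m * Polynomial.aeval (q ^ m) P
  have hs1 : ∀ m, ‖s m‖ ≤ 1 := by
    intro m
    simp only [s]
    rw [sub_eq_add_neg]
    refine (IsUltrametricDist.norm_add_le_max _ _).trans (max_le ?_ ?_)
    rotate_left
    rw [norm_neg]
    rotate_left
    · refine IsUltrametricDist.norm_sum_le_of_forall_le_of_nonneg zero_le_one fun i _ => ?_
      rw [norm_pow]; exact pow_le_one₀ (norm_nonneg _) (hα1 i)
    · refine IsUltrametricDist.norm_sum_le_of_forall_le_of_nonneg zero_le_one fun i _ => ?_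
      rw [norm_pow]; exact pow_le_one₀ (norm_nonneg _) (hβ1 i)
  have hint : ∀ (F : Polynomial ℤ) (x : K), ‖x‖ ≤ 1 → ‖Polynomial.aeval x F‖ ≤ 1 := by
    intro F x hx
    rw [Polynomial.aeval_eq_sum_range]
    refine IsUltrametricDist.norm_sum_le_of_forall_le_of_nonneg zero_le_one fun i _ => ?_
    rw [zsmul_eq_mul, norm_mul, norm_pow]
    exact mul_le_one₀ (IsUltrametricDist.norm_intCast_le_one K _) (by positivity)
      (pow_le_one₀ (norm_nonneg _) hx)
  have hqm : ∀ m, 1 ≤ m → ‖q ^ m‖ < 1 := by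
    intro m hm; rw [norm_pow]; exact pow_lt_one₀ hq0'.le hq1 (by omega)
  have hv1 : ∀ m, 1 ≤ m → ‖v m‖ ≤ 1 := by
    intro m hm
    have h1 : ‖1 - q ^ m‖ = 1 := by
      have := IsUltrametricDist.norm_sub_eq_max_of_norm_sub_ne_norm_sub (1:K) 0 (q ^ m)
        (by simpa using (hqm m hm).ne')
      simpa [(hqm m hm).le, max_eq_left, pow_le_one₀ hq0'.le hq1.le] using this
    have h2 := congrArg norm (hps m hm)
    rw [norm_mul, norm_pow, h1, one_pow, one_mul] at h2
    rw [← h2]; exact hs1 m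
  have hw : ∀ m, 1 ≤ m → ‖w m‖ ≤ (‖q‖ ^ (J+1)) ^ m := by
    intro m hm
    have e : w m = v m * (Polynomial.aeval (q ^ m) P' * (q ^ m) ^ (J+1)) := by
      have := congrArg (Polynomial.aeval (q ^ m)) hPP
      simp only [map_add, map_mul, map_pow, map_sub, map_one, Polynomial.aeval_X] at this
      simp only [w, s]
      rw [hps m hm]
      linear_combination (-v m) * this
    rw [e, norm_mul, norm_mul, norm_pow, norm_pow, pow_right_comm]
    calc _ ≤ 1 * (1 * (‖q‖ ^ (J+1)) ^ m) := by
          gcongr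
          · exact hv1 m hm
          · exact hint _ _ (hqm m hm).le
      _ = _ := by ring
  obtain ⟨Q, hQ⟩ : ∃ Q, LD w Q := ⟨_, LD.exists' w⟩
  obtain ⟨Q', hQ'⟩ : ∃ Q', LD (fun m => - w m) Q' := ⟨_, LD.exists' _⟩
  have hQQ : Q * Q' = 1 := ((hQ.mul hQ').congr (by simp)).unique LD.one
  have hSNQ : ∀ (w' : ℕ → K) Q, LD w' Q → (∀ m, 1 ≤ m → ‖w' m‖ ≤ (‖q‖ ^ (J+1)) ^ m) →
      SN (PowerSeries.rescale b⁻¹ Q) := by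
    intro w' Q hQ hw
    have hb2 := hQ.bound (by positivity) hw
    have hr : ‖q‖ ^ (J+1) * c * ‖b‖⁻¹ < 1 := by
      have : ‖q‖ ^ (J+1) ≤ ‖q‖ ^ J := pow_le_pow_of_le_one hq0'.le hq1.le (by omega)
      have h3 : ‖q‖ ^ (J+1) < ‖b‖ / c := by linarith
      rw [lt_div_iff₀ hc] at h3
      rw [← div_eq_mul_inv, div_lt_one hbn]; exact h3
    refine SN.of_bound 1 _ (by positivity) hr fun n => ?_
    rw [coeff_rescale, norm_mul, norm_pow, norm_inv, one_mul, mul_pow, mul_pow, mul_comm]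
    gcongr
    have h4 := hb2 n
    rw [norm_mul] at h4
    calc ‖coeff n Q‖ ≤ ‖coeff n Q‖ * (‖(n.factorial : K)‖ * c ^ n) :=
          le_mul_of_one_le_right (norm_nonneg _) (hfac n)
      _ = (‖(n.factorial : K)‖ * ‖coeff n Q‖) * c ^ n := by ring
      _ ≤ _ := by gcongr
  have hQ1 := hSNQ w Q hQ hw
  have hQ2 := hSNQ _ Q' hQ' (by simpa using hw)
  have hQne : ev (PowerSeries.rescale b⁻¹ Q) ≠ 0 := by
    intro h0
    have := ev_mul hQ1 hQ2
    rw [← map_mul, hQQ, map_one, ev_one, h0, zero_mul] at this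
    exact one_ne_zero this
  -- index set
  let I := Finset.range (P.natDegree + 1) ×ˢ (Finset.univ : Finset (Fin R ⊕ Fin S))
  let cc : ℕ × (Fin R ⊕ Fin S) → K := fun x => q ^ x.1 * Sum.elim α β x.2
  let nn : ℕ × (Fin R ⊕ Fin S) → ℤ := fun x => P.coeff x.1 * Sum.elim (fun _ => 1) (fun _ => -1) x.2
  have hsum : ∀ m, s m * Polynomial.aeval (q ^ m) P = ∑ x ∈ I, (nn x : K) * cc x ^ m := by
    intro m
    rw [Polynomial.aeval_eq_sum_range, Finset.sum_product, Finset.mul_sum]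
    refine Finset.sum_congr rfl fun i _ => ?_
    rw [Fintype.sum_sum_type]
    simp only [s, nn, cc, Sum.elim_inl, Sum.elim_inr, zsmul_eq_mul]
    rw [sub_mul, Finset.sum_mul, Finset.sum_mul, sub_eq_add_neg, ← Finset.sum_neg_distrib]
    congr 1
    · refine Finset.sum_congr rfl fun i _ => ?_
      push_cast; ring
    · refine Finset.sum_congr rfl fun i _ => ?_
      push_cast; ring
  have hLD : ∀ e : ℕ × (Fin R ⊕ Fin S) → ℕ, LD (fun m => ∑ x ∈ I, (e x : K) * cc x ^ m)
      (∏ x ∈ I, (1 - C (cc x) * X) ^ e x) := fun e =>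
    LD.prod I fun x _ => (LD.one_sub (cc x)).pow (e x)
  have hEv : ∀ e : ℕ × (Fin R ⊕ Fin S) → ℕ,
      SN (PowerSeries.rescale b⁻¹ (∏ x ∈ I, (1 - C (cc x) * X) ^ e x)) ∧
      ev (PowerSeries.rescale b⁻¹ (∏ x ∈ I, (1 - C (cc x) * X) ^ e x)) =
        ∏ x ∈ I, (1 - cc x * b⁻¹) ^ e x := by
    intro e
    simp only [map_prod, map_pow, rescale_one_sub]
    have h1 := fun x : ℕ × (Fin R ⊕ Fin S) => (SN.one_sub (cc x * b⁻¹)).pow (e x)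
    have h2 := SN.prod I (fun x => (1 - C (cc x * b⁻¹) * X) ^ e x) (fun x _ => (h1 x).1)
    refine ⟨h2.1, h2.2.trans (Finset.prod_congr rfl fun x _ => ?_)⟩
    rw [(h1 x).2, ev_one_sub]
  have hkey : A * ∏ x ∈ I, (1 - C (cc x) * X) ^ (-nn x).toNat =
      (∏ x ∈ I, (1 - C (cc x) * X) ^ (nn x).toNat) * Q := by
    refine (hA.mul (hLD _)).unique (((hLD _).mul hQ).congr fun m hm => ?_)
    simp only [w]
    rw [hsum, add_sub_left_comm, ← Finset.sum_sub_distrib]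
    congr 1
    refine Finset.sum_congr rfl fun x _ => ?_
    rw [← sub_mul]
    congr 1
    have : ((nn x).toNat : ℤ) - ((-nn x).toNat : ℤ) = nn x := by omega
    have h3 : (((nn x).toNat : ℤ) : K) - (((-nn x).toNat : ℤ) : K) = ((nn x : ℤ) : K) := by
      rw [← this]; push_cast; simp
    push_cast at h3
    rw [← h3]; ring
  have hSA : SN (PowerSeries.rescale b⁻¹ A) := by
    obtain ⟨B, hB⟩ := hent (2 * ‖b‖⁻¹) (by positivity)
    refine SN.of_bound B (1/2) (by norm_num) (by norm_num) fun n => ?_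
    rw [coeff_rescale, norm_mul, norm_pow, norm_inv]
    have := hB n
    rw [mul_pow] at this
    have e : B * (1/2:ℝ) ^ n - ‖b‖⁻¹ ^ n * ‖coeff n A‖ = (1/2:ℝ)^n * (B - ‖coeff n A‖ * (2 ^ n * ‖b‖⁻¹ ^ n)) := by
      have : (1/2:ℝ)^n * 2 ^ n = 1 := by rw [← mul_pow]; norm_num
      linear_combination (‖b‖⁻¹ ^ n * ‖coeff n A‖) * this
    have := mul_nonneg (show 0 ≤ (1/2:ℝ)^n by positivity) (sub_nonneg.mpr this)
    linarith
  have h1 := congrArg (fun f => ev (PowerSeries.rescale b⁻¹ f)) hkey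
  simp only [map_mul (PowerSeries.rescale b⁻¹)] at h1
  rw [ev_mul hSA (hEv _).1, ev_mul (hEv _).1 hQ1, (hEv _).2, (hEv _).2] at h1
  have hz : ∏ x ∈ I, (1 - cc x * b⁻¹) ^ (-nn x).toNat = 0 := by
    refine Finset.prod_eq_zero (i := (0, Sum.inr j1)) (by simp [I]) ?_
    simp [cc, nn, hP0, ← hbdef, hb0]
  rw [hz, mul_zero] at h1
  rcases mul_eq_zero.mp h1.symm with h2 | h2
  · obtain ⟨⟨i, x⟩, hx, hx0⟩ := Finset.prod_eq_zero_iff.mp h2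
    have hx1 := eq_zero_of_pow_eq_zero hx0
    have hx2 : b = cc (i, x) := by
      field_simp at hx1
      linear_combination hx1
    rcases x with x | x
    · exact ha i x hx2
    · have hi := hb i x hx2
      subst hi
      simp [nn, hP0] at hx0
  · exact hQne h2

def ahv (p : ℕ) (K : Type*) [Field K] (m : ℕ) : K := if ∃ k, m = p ^ k then -1 else 0

theorem padic_norm_fac (p : ℕ) [Fact p.Prime] (n : ℕ) (hn : n ≠ 0) :
    ‖((p:ℚ_[p]) ^ n / n.factorial)‖ ≤ (p:ℝ)⁻¹ := by
  have hp := (Fact.out : p.Prime)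
  have h1 : (n.factorial : ℚ_[p]) ≠ 0 := by exact_mod_cast n.factorial_ne_zero
  rw [norm_div, norm_pow, Padic.norm_p, div_le_iff₀ (norm_pos_iff.mpr h1)]
  have h2 : ‖(n.factorial : ℚ_[p])‖ = (p:ℝ)⁻¹ ^ padicValNat p n.factorial := by
    rw [Padic.norm_eq_zpow_neg_valuation h1, Padic.valuation_natCast]
    simp
  rw [h2, ← pow_succ']
  refine pow_le_pow_of_le_one (by positivity) (inv_le_one_of_one_le₀ (by exact_mod_cast hp.one_lt.le)) ?_
  exact padicValNat_factorial_lt_of_ne_zero p hn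

theorem padic_norm_le_inv_iff (p : ℕ) [Fact p.Prime] (x : ℤ_[p]) : ‖x‖ ≤ (p:ℝ)⁻¹ ↔ (p : ℤ_[p]) ∣ x := by
  have := PadicInt.norm_le_pow_iff_mem_span_pow x 1
  simpa [Ideal.mem_span_singleton] using this

open PowerSeries in
theorem AH_int (p : ℕ) [Fact p.Prime] (A : PowerSeries ℚ_[p]) (hA : LD (ahv p ℚ_[p]) A) (n : ℕ) :
    ‖coeff n A‖ ≤ 1 := by
  have hp := (Fact.out : p.Prime)
  have hp0 := hp.ne_zero
  -- exponential
  let Ep : PowerSeries ℚ_[p] := mk fun n => (p:ℚ_[p]) ^ n / n.factorial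
  have hE : LD (fun m => if m = 1 then -(p:ℚ_[p]) else 0) Ep := by
    refine ⟨by simp [Ep], ?_⟩
    have : (mk (fun m => if m = 0 then 0 else if m = 1 then -(p:ℚ_[p]) else 0) : PowerSeries ℚ_[p]) = 
        - (C (p:ℚ_[p]) * X) := by
      ext m
      rw [map_neg, coeff_C_mul, coeff_mk, coeff_X]
      rcases m with _ | _ | m <;> simp
    rw [this]
    ext m
    rcases m with _ | m
    · simp
    rw [mul_comm X, PowerSeries.coeff_succ_mul_X, coeff_derivative, neg_neg, mul_assoc, coeff_C_mul,
      mul_comm X, PowerSeries.coeff_succ_mul_X]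
    simp only [Ep, coeff_mk]
    have h1 : (m.factorial : ℚ_[p]) ≠ 0 := by exact_mod_cast m.factorial_ne_zero
    have h2 : (m + 1: ℚ_[p]) ≠ 0 := by exact_mod_cast m.succ_ne_zero
    rw [Nat.factorial_succ]; push_cast
    field_simp
    ring
  have key : A ^ p = PowerSeries.expand p hp0 A * Ep := by
    refine (hA.pow p).unique (((hA.expand p hp0).mul hE).congr fun m hm => ?_)
    simp only [ahv]
    by_cases h1 : m = 1
    · subst h1
      have : ¬ p ∣ 1 := hp.one_lt.ne' ∘ Nat.dvd_one.mp
      have h2 : ∃ k, 1 = p ^ k := ⟨0, by simp⟩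
      simp [this, h2]
    · by_cases hd : p ∣ m
      · obtain ⟨k, rfl⟩ := hd
        rw [Nat.mul_div_cancel_left _ hp.pos]
        have : (∃ k_1, p * k = p ^ k_1) ↔ ∃ k_1, k = p ^ k_1 := by
          constructor
          · rintro ⟨j, hj⟩
            rcases j with _ | j
            · exact absurd hj h1
            · exact ⟨j, Nat.eq_of_mul_eq_mul_left hp.pos (by rw [hj, pow_succ'])⟩
          · rintro ⟨j, rfl⟩; exact ⟨j+1, by rw [pow_succ']⟩
        simp [this, h1]
      · have : ¬ ∃ k, m = p ^ k := by
          rintro ⟨k, rfl⟩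
          rcases k with _ | k
          · simp at h1
          · exact hd (dvd_pow_self p (by simp))
        simp [hd, h1, this]
  induction n using Nat.strong_induction_on with
  | _ n ih =>
  rcases Nat.eq_zero_or_pos n with rfl | hn
  · simp [hA.1, -coeff_zero_eq_constantCoeff]
  -- lift
  obtain ⟨a', ha'⟩ : ∃ a' : ℕ → ℤ_[p], ∀ i < n, (a' i : ℚ_[p]) = coeff i A := by
    refine ⟨fun i => if h : i < n then ⟨coeff i A, ih i h⟩ else 0, fun i hi => ?_⟩
    simp [hi]
  let f : Polynomial ℤ_[p] := ∑ i ∈ Finset.range n, Polynomial.monomial i (a' i)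
  let ψ : ℤ_[p] →+* ℚ_[p] := PadicInt.Coe.ringHom
  have hfc : ∀ i, f.coeff i = if i < n then a' i else 0 := by
    intro i
    simp only [f, Polynomial.finsetSum_coeff, Polynomial.coeff_monomial]
    simp
  let F : PowerSeries ℚ_[p] := ((f.map ψ : Polynomial ℚ_[p]) : PowerSeries ℚ_[p])
  let g : PowerSeries ℚ_[p] := mk fun i => coeff (n + i) A
  have hAF : A = F + X ^ n * g := by
    ext i
    rw [map_add, coeff_X_pow_mul', Polynomial.coeff_coe, Polynomial.coeff_map, hfc]
    by_cases h : i < n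
    · rw [if_pos h, if_neg (not_le.mpr h), add_zero, ← ha' i h]; rfl
    · rw [if_neg h, if_pos (not_lt.mp h), map_zero, zero_add]
      simp only [g, coeff_mk]
      rw [Nat.add_sub_cancel' (not_lt.mp h)]
  obtain ⟨k, hk⟩ := Polynomial.powAddExpansion F (X ^ n * g) p
  have hF0 : coeff 0 F = 1 := by
    have := hA.1
    rw [hAF, map_add, coeff_X_pow_mul', if_neg (by omega), add_zero] at this
    exact this
  have hg0 : coeff 0 g = coeff n A := by simp [g, -coeff_zero_eq_constantCoeff]
  have c1 : coeff n (A ^ p) = coeff n (F ^ p) + p * coeff n A := by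
    conv_lhs => rw [hAF, hk]
    have e1 : (p : PowerSeries ℚ_[p]) * F ^ (p-1) * (X ^ n * g) = X ^ n * (C (p : ℚ_[p]) * F ^ (p-1) * g) := by
      rw [map_natCast]; ring
    have e2 : k * (X ^ n * g) ^ 2 = X ^ (n + n) * (k * g ^ 2) := by ring
    rw [e1, e2, map_add, map_add, coeff_X_pow_mul', coeff_X_pow_mul', if_pos le_rfl, if_neg (by omega),
      add_zero, Nat.sub_self]
    congr 1
    simp only [coeff_zero_eq_constantCoeff_apply, map_mul, map_pow] at *
    rw [hF0, hg0]; simp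
  have c2 : coeff n (PowerSeries.expand p hp0 A * Ep) = coeff n (PowerSeries.expand p hp0 F) +
      ∑ x ∈ (Finset.HasAntidiagonal.antidiagonal n).erase (n, 0), coeff x.1 (PowerSeries.expand p hp0 F) * coeff x.2 Ep := by
    rw [coeff_mul, ← Finset.add_sum_erase _ _ (show (n,0) ∈ Finset.HasAntidiagonal.antidiagonal n by simp)]
    have hh : ∀ i ≤ n, coeff i (PowerSeries.expand p hp0 A) = coeff i (PowerSeries.expand p hp0 F) := by
      intro i hi
      rw [coeff_expand, coeff_expand]
      split_ifs with h
      · obtain ⟨j, rfl⟩ := h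
        rw [Nat.mul_div_cancel_left _ hp.pos]
        conv_lhs => rw [hAF]
        rw [map_add, coeff_X_pow_mul', if_neg, add_zero]
        have := hp.two_le
        nlinarith
      · rfl
    congr 1
    · rw [hh n le_rfl]; simp [Ep]
    · refine Finset.sum_congr rfl fun x hx => ?_
      rw [hh]
      simp at hx; omega
  have hexp : PowerSeries.expand p hp0 F = (((Polynomial.expand ℤ_[p] p f).map ψ : Polynomial ℚ_[p]) : PowerSeries ℚ_[p]) := by
    ext i
    rw [Polynomial.coeff_coe, Polynomial.map_expand, coeff_expand, Polynomial.coeff_expand hp.pos, Polynomial.coeff_coe]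
  have hpow : F ^ p = (((f ^ p).map ψ : Polynomial ℚ_[p]) : PowerSeries ℚ_[p]) := by
    simp [F, Polynomial.map_pow]
  have hmod : (p : ℤ_[p]) ∣ (Polynomial.expand ℤ_[p] p f - f ^ p).coeff n := by
    have h1 : (Polynomial.expand ℤ_[p] p f - f ^ p).map (PadicInt.toZMod (p := p)) = 0 := by
      rw [Polynomial.map_sub, Polynomial.map_expand, Polynomial.map_pow, ZMod.expand_card, sub_self]
    have h2 := congrArg (fun P => Polynomial.coeff P n) h1
    simp only [Polynomial.coeff_map, Polynomial.coeff_zero] at h2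
    have h3 : _ ∈ RingHom.ker (PadicInt.toZMod (p := p)) := h2
    rw [PadicInt.ker_toZMod, PadicInt.maximalIdeal_eq_span_p, Ideal.mem_span_singleton] at h3
    exact h3
  rw [← padic_norm_le_inv_iff] at hmod
  have heq : (p : ℚ_[p]) * coeff n A = ψ ((Polynomial.expand ℤ_[p] p f - f ^ p).coeff n) + 
      ∑ x ∈ (Finset.HasAntidiagonal.antidiagonal n).erase (n, 0), coeff x.1 (PowerSeries.expand p hp0 F) * coeff x.2 Ep := by
    rw [key, c2, hexp, hpow, Polynomial.coeff_coe, Polynomial.coeff_coe, Polynomial.coeff_map, Polynomial.coeff_map] at c1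
    rw [hexp, Polynomial.coeff_sub, map_sub]
    linear_combination -c1
  have hno : ‖(p : ℚ_[p]) * coeff n A‖ ≤ (p:ℝ)⁻¹ := by
    rw [heq]
    refine (IsUltrametricDist.norm_add_le_max _ _).trans (max_le hmod ?_)
    refine IsUltrametricDist.norm_sum_le_of_forall_le_of_nonneg (by positivity) fun x hx => ?_
    rw [norm_mul, hexp, Polynomial.coeff_coe, Polynomial.coeff_map]
    have h1 : ‖ψ ((Polynomial.expand ℤ_[p] p f).coeff x.1)‖ ≤ 1 := PadicInt.norm_le_one _
    have h2 : ‖coeff x.2 Ep‖ ≤ (p:ℝ)⁻¹ := by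
      simp only [Ep, coeff_mk]
      refine padic_norm_fac p x.2 ?_
      intro h0
      simp at hx
      apply hx.1; ext <;> simp <;> omega
    calc _ ≤ 1 * (p:ℝ)⁻¹ := by gcongr
      _ = _ := one_mul _
  rw [norm_mul, Padic.norm_p] at hno
  have : (0:ℝ) < (p:ℝ)⁻¹ := by have := hp.pos; positivity
  nlinarith

abbrev OO (L : Type*) [NormedField L] [IsUltrametricDist L] : ValuationSubring L :=
  (NormedField.valuation (K := L)).valuationSubring

theorem mem_OO {L : Type*} [NormedField L] [IsUltrametricDist L] {x : L} : x ∈ OO L ↔ ‖x‖ ≤ 1 := Iff.rfl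

abbrev kk (L : Type*) [NormedField L] [IsUltrametricDist L] := IsLocalRing.ResidueField (OO L)

def red (L : Type*) [NormedField L] [IsUltrametricDist L] : OO L →+* kk L := IsLocalRing.residue _

theorem red_surj (L : Type*) [NormedField L] [IsUltrametricDist L] : Function.Surjective (red L) :=
  IsLocalRing.residue_surjective

theorem red_zero {L : Type*} [NormedField L] [IsUltrametricDist L] (x : OO L) :
    red L x = 0 ↔ ‖(x : L)‖ < 1 := by
  rw [red, IsLocalRing.residue_eq_zero_iff, IsLocalRing.mem_maximalIdeal, mem_nonunits_iff]
  have h1 := (Valuation.integer.integers (NormedField.valuation (K := L))).isUnit_iff_valuation_eq_one (x := x)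
  have h2 : IsUnit x ↔ ‖(x:L)‖ = 1 := by
    refine h1.trans ?_
    change ‖(x:L)‖₊ = 1 ↔ _
    rw [← NNReal.coe_inj]; rfl
  rw [h2]
  exact ⟨fun h => lt_of_le_of_ne x.2 h, fun h => h.ne⟩

theorem integral_norm_le {L : Type*} [NormedField L] [IsUltrametricDist L] (x : L)
    (hx : IsIntegral (OO L) x) : ‖x‖ ≤ 1 :=
  (Valuation.integer.integers (NormedField.valuation (K := L))).mem_of_integral hx

theorem int_norm_le {L : Type*} [NormedField L] [IsUltrametricDist L] (x : L)
    (hx : IsIntegral ℤ x) : ‖x‖ ≤ 1 :=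
  integral_norm_le x hx.tower_top

instance kk_closed (L : Type*) [NormedField L] [IsUltrametricDist L] [IsAlgClosed L] : IsAlgClosed (kk L) := by
  apply IsAlgClosed.of_exists_root
  intro f hf hirr
  obtain ⟨g, hg, hdeg, hgm⟩ := Polynomial.lifts_and_natDegree_eq_and_monic
    (Polynomial.mem_lifts (f := red L) _ |>.mpr (Polynomial.map_surjective _ (red_surj L) f)) hf
  have hd : (g.map (algebraMap (OO L) L)).degree ≠ 0 := by
    rw [hgm.degree_map]
    have := hirr.natDegree_pos
    rw [← hdeg] at this
    exact (Polynomial.natDegree_pos_iff_degree_pos.mp this).ne'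
  obtain ⟨y, hy⟩ := IsAlgClosed.exists_root _ hd
  have hyi : IsIntegral (OO L) y := ⟨g, hgm, by rw [← Polynomial.eval_map]; exact hy⟩
  let y' : OO L := ⟨y, integral_norm_le y hyi⟩
  refine ⟨red L y', ?_⟩
  rw [← hg, Polynomial.eval_map, Polynomial.eval₂_hom]
  have : g.eval y' = 0 := by
    apply Subtype.ext
    change (algebraMap (OO L) L) (g.eval y') = 0
    rw [← Polynomial.eval₂_at_apply, ← Polynomial.eval_map]; exact hy
  rw [this, map_zero]

theorem teich_unique {L : Type*} [NormedField L] [IsUltrametricDist L] (p d : ℕ) (hd : d ≠ 0)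
    (hp : ‖(p:L)‖ < 1) (y z : OO L) (hy : y ^ p ^ d = y) (hz : z ^ p ^ d = z)
    (h : red L y = red L z) : y = z := by
  by_contra hne
  have hw : y - z ≠ 0 := sub_ne_zero.mpr hne
  obtain ⟨k, hk⟩ := Polynomial.powAddExpansion z (y - z) (p ^ d)
  rw [add_sub_cancel, hy, hz] at hk
  have h1 : (1 : OO L) = (p ^ d : ℕ) * z ^ (p ^ d - 1) + k * (y - z) := by
    apply mul_right_cancel₀ hw
    linear_combination hk
  have h2 : red L (((p ^ d : ℕ) : OO L)) = 0 := by
    rw [red_zero]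
    push_cast
    rw [norm_pow]; exact pow_lt_one₀ (norm_nonneg _) hp hd
  have h3 := congrArg (red L) h1
  rw [map_add, map_mul, map_mul, h2, map_sub, h, map_one] at h3
  simp at h3

theorem sum_frob {R : Type*} [CommRing R] (p d : ℕ) (y : R) (hy : y ^ p ^ d = y) (i : ℕ) :
    ∑ j ∈ Finset.range d, (y ^ p ^ i) ^ p ^ j = ∑ j ∈ Finset.range d, y ^ p ^ j := by
  induction i with
  | zero => simp
  | succ i ih =>
    rw [← ih]
    have h1 := Finset.sum_range_succ (fun j => (y ^ p ^ i) ^ p ^ j) d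
    have h2 := Finset.sum_range_succ' (fun j => (y ^ p ^ i) ^ p ^ j) d
    have h3 : (y ^ p ^ i) ^ p ^ d = y ^ p ^ i := by rw [pow_right_comm, hy]
    rw [h1, h3] at h2
    simp only [pow_zero, pow_one, add_left_inj] at h2
    rw [h2]
    refine Finset.sum_congr rfl fun j _ => ?_
    rw [← pow_mul, ← pow_mul, ← pow_add, ← pow_add]; congr 2; ring

theorem prod_frob {R : Type*} [CommRing R] [IsDomain R] (p d : ℕ) (y : R) (hy : y ^ p ^ d = y) (f : R → Polynomial R)
     :
    ∏ j ∈ Finset.range d, f (y ^ p ^ (j+1)) = ∏ j ∈ Finset.range d, f (y ^ p ^ j) := by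
  rcases d with _ | d
  · simp
  rw [Finset.prod_range_succ, Finset.prod_range_succ', hy]; simp

theorem mem_prime_field (p : ℕ) [Fact p.Prime] (x : Omg p) (hx : x ^ p = x) :
    ∃ z : ZMod p, algebraMap (ZMod p) (Omg p) z = x := by
  rw [← Subfield.mem_bot_iff_pow_eq_self (Omg p) p, ← ZMod.fieldRange_castHom_eq_bot p] at hx
  obtain ⟨z, hz⟩ := hx
  refine ⟨z, ?_⟩
  rw [← hz]
  congr 1
  exact Subsingleton.elim _ _

theorem omg_fix (p : ℕ) [Fact p.Prime] (x : Omg p) : ∃ d, d ≠ 0 ∧ x ^ p ^ d = x := by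
  have hx : IsIntegral (ZMod p) x := Algebra.IsIntegral.isIntegral x
  have := IntermediateField.adjoin.finiteDimensional hx
  let F := IntermediateField.adjoin (ZMod p) {x}
  have : Finite F := Module.finite_of_finite (ZMod p)
  let := Fintype.ofFinite F
  refine ⟨Module.finrank (ZMod p) F, Module.finrank_pos.ne', ?_⟩
  have h1 : Fintype.card F = p ^ Module.finrank (ZMod p) F := by
    rw [Module.card_eq_pow_finrank (K := ZMod p), ZMod.card]
  have h2 := FiniteField.pow_card (⟨x, IntermediateField.mem_adjoin_simple_self _ x⟩ : F)
  rw [h1] at h2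
  exact congrArg Subtype.val h2

theorem norm_p_lt (p : ℕ) [Fact p.Prime] : ‖(p : PadicAlgCl p)‖ < 1 := by
  have := PadicAlgCl.norm_extends p (p : ℚ_[p])
  rw [Padic.norm_p] at this
  rw [← map_natCast (algebraMap ℚ_[p] (PadicAlgCl p)), this]
  exact inv_lt_one_of_one_lt₀ (by exact_mod_cast (Fact.out : p.Prime).one_lt)

theorem kk_charP (p : ℕ) [Fact p.Prime] : CharP (kk (PadicAlgCl p)) p := by
  refine (CharP.charP_iff_prime_eq_zero (Fact.out : p.Prime)).mpr ?_
  have : red (PadicAlgCl p) (p : OO (PadicAlgCl p)) = 0 := by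
    rw [red_zero]; push_cast; exact norm_p_lt p
  simpa using this

/-- the lift of a root of `X^Q - X`. -/
theorem teich_lift {L : Type*} [NormedField L] [IsUltrametricDist L] [IsAlgClosed L] (Q : ℕ) (hQ : 1 < Q)
    (w : kk L) (hw : w ^ Q = w) : ∃ y : OO L, y ^ Q = y ∧ red L y = w := by
  obtain ⟨y, rfl⟩ := red_surj L w
  let P : Polynomial L := Polynomial.X ^ Q - Polynomial.X
  have hPm : P.Monic := Polynomial.monic_X_pow_sub (by simpa using hQ)
  have hs : P.Splits := IsAlgClosed.splits P
  have hP := hs.eq_prod_roots_of_monic hPm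
  have hmem : ∀ r ∈ P.roots, r ^ Q = r := by
    intro r hr
    have := Polynomial.isRoot_of_mem_roots hr
    simp [P, sub_eq_zero] at this; exact this
  have hle : ∀ r ∈ P.roots, r ∈ OO L := by
    intro r hr
    have h1 := hmem r hr
    rw [mem_OO]
    by_contra h
    push Not at h
    have := congrArg norm h1
    rw [norm_pow] at this
    have h2 := lt_self_pow₀ h hQ
    linarith
  have h1 : ‖(P.roots.map (fun r => (y : L) - r)).prod‖ < 1 := by
    have h2 := congrArg (Polynomial.eval (y : L)) hP
    rw [Polynomial.eval_multiset_prod, Multiset.map_map] at h2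
    simp only [Function.comp_def, Polynomial.eval_sub, Polynomial.eval_X, Polynomial.eval_C] at h2
    rw [← h2]
    have h3 : red L (y ^ Q - y) = 0 := by rw [map_sub, map_pow, hw, sub_self]
    rw [red_zero] at h3
    simpa [P] using h3
  have h2 : ∃ r ∈ P.roots, ‖(y:L) - r‖ < 1 := by
    by_contra hcon
    push Not at hcon
    have : ∀ s : Multiset L, (∀ r ∈ s, 1 ≤ ‖(y:L) - r‖) → 1 ≤ ‖(s.map (fun r => (y : L) - r)).prod‖ := by
      intro s
      induction s using Multiset.induction_on with
      | empty => simp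
      | cons a s ih =>
        intro h
        rw [Multiset.map_cons, Multiset.prod_cons, norm_mul]
        exact one_le_mul_of_one_le_of_one_le (h a (by simp)) (ih fun r hr => h r (by simp [hr]))
    linarith [this _ hcon]
  obtain ⟨r, hr, hyr⟩ := h2
  refine ⟨⟨r, hle r hr⟩, Subtype.ext (hmem r hr), ?_⟩
  have : red L (y - ⟨r, hle r hr⟩) = 0 := by rw [red_zero]; exact hyr
  rw [map_sub, sub_eq_zero] at this
  exact this.symm

theorem pow_fix_mul {M : Type*} [Monoid M] (p d e : ℕ) (y : M) (hy : y ^ p ^ d = y) : y ^ p ^ (d * e) = y := by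
  induction e with
  | zero => simp
  | succ e ih => rw [Nat.mul_succ, pow_add, pow_mul, ih, hy]

theorem teich_exists (p : ℕ) [Fact p.Prime] :
    ∃ (ι : Omg p →+* kk (PadicAlgCl p)) (τ : Omg p →*₀ OO (PadicAlgCl p)),
      Function.Injective τ ∧ ∀ x, red _ (τ x) = ι x := by
  have := kk_charP p
  let _ : Algebra (ZMod p) (kk (PadicAlgCl p)) := ZMod.algebra _ p
  let ι : Omg p →+* kk (PadicAlgCl p) := (IsAlgClosed.lift : Omg p →ₐ[ZMod p] kk (PadicAlgCl p)).toRingHom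
  have hp := (Fact.out : p.Prime)
  have hex : ∀ x : Omg p, ∃ y : OO (PadicAlgCl p), (∃ d, d ≠ 0 ∧ y ^ p ^ d = y) ∧ red _ y = ι x := by
    intro x
    obtain ⟨d, hd, hx⟩ := omg_fix p x
    obtain ⟨y, hy, h⟩ := teich_lift (L := PadicAlgCl p) (p ^ d) (Nat.one_lt_pow hd hp.one_lt) (ι x) (by rw [← map_pow, hx])
    exact ⟨y, ⟨d, hd, hy⟩, h⟩
  choose τ hτ hred using hex
  have huniq : ∀ y z : OO (PadicAlgCl p), (∃ d, d ≠ 0 ∧ y ^ p ^ d = y) → (∃ d, d ≠ 0 ∧ z ^ p ^ d = z) →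
      red _ y = red _ z → y = z := by
    rintro y z ⟨d, hd, hy⟩ ⟨e, he, hz⟩ h
    refine teich_unique p (d * e) (mul_ne_zero hd he) (norm_p_lt p) y z (pow_fix_mul p d e y hy) ?_ h
    rw [mul_comm]; exact pow_fix_mul p e d z hz
  refine ⟨ι, ⟨⟨τ, ?_⟩, ?_, ?_⟩, ?_, hred⟩
  · refine huniq _ _ (hτ 0) ⟨1, one_ne_zero, by simp [hp.ne_zero]⟩ ?_
    rw [hred, map_zero, map_zero]
  · refine huniq _ _ (hτ 1) ⟨1, one_ne_zero, by simp⟩ ?_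
    rw [hred, map_one, map_one]
  · intro x y
    refine huniq _ _ (hτ _) ?_ ?_
    · obtain ⟨d, hd, hx⟩ := hτ x
      obtain ⟨e, he, hy⟩ := hτ y
      refine ⟨d * e, mul_ne_zero hd he, ?_⟩
      rw [mul_pow]
      change τ x ^ _ * τ y ^ _ = τ x * τ y
      rw [pow_fix_mul p d e _ hx, mul_comm d, pow_fix_mul p e d _ hy]
    · change red _ (τ (x * y)) = red _ (τ x * τ y)
      rw [map_mul, hred, hred, hred, map_mul]
  · intro x y h
    apply ι.injective
    rw [← hred, ← hred]
    exact congrArg _ h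

theorem frob_poly (p : ℕ) [Fact p.Prime] (d : ℕ) (x : Omg p) (hx : x ^ p ^ d = x) :
    ∃ g : Polynomial ℤ, g.map (Int.castRingHom (Omg p)) =
      ∏ j ∈ Finset.range d, (Polynomial.X - Polynomial.C (x ^ p ^ j)) := by
  set c : Polynomial (Omg p) := ∏ j ∈ Finset.range d, (Polynomial.X - Polynomial.C (x ^ p ^ j)) with hc
  have h1 : c.map (frobenius (Omg p) p) = c := by
    rw [hc, Polynomial.map_prod]
    rw [← prod_frob p d x hx (fun y => Polynomial.X - Polynomial.C y)]
    refine Finset.prod_congr rfl fun j _ => ?_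
    simp only [Polynomial.map_sub, Polynomial.map_X, Polynomial.map_C, frobenius_def, ← pow_mul, pow_succ]
  have h2 : c ∈ Polynomial.lifts (Int.castRingHom (Omg p)) := by
    rw [Polynomial.lifts_iff_coeff_lifts]
    intro i
    have h3 := congrArg (fun P => Polynomial.coeff P i) h1
    simp only [Polynomial.coeff_map, frobenius_def] at h3
    obtain ⟨z, hz⟩ := mem_prime_field p _ h3
    refine ⟨(z.val : ℤ), ?_⟩
    rw [← hz]
    rw [eq_intCast, Int.cast_natCast, ← map_natCast (algebraMap (ZMod p) (Omg p)), ZMod.natCast_zmod_val]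
  exact (Polynomial.mem_lifts _).mp h2

theorem traceZmod_spec (p : ℕ) [Fact p.Prime] (d : ℕ) (x : Omg p) (hx : x ^ p ^ d = x) :
    algebraMap (ZMod p) (Omg p) (traceZmod p d x) = ∑ j ∈ Finset.range d, x ^ p ^ j := by
  unfold traceZmod
  apply Function.invFun_eq
  apply mem_prime_field
  rw [← frobenius_def, map_sum, ← sum_frob p d x hx 1]
  refine Finset.sum_congr rfl fun j _ => ?_
  rw [frobenius_def]; ring

theorem teich_trace (p : ℕ) [Fact p.Prime] :
    ∃ (τ : Omg p →*₀ PadicAlgCl p), Function.Injective τ ∧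
      ∀ d x, x ^ p ^ d = x → ∃ t : ℤ_[p], ∑ j ∈ Finset.range d, τ x ^ p ^ j = algebraMap ℚ_[p] (PadicAlgCl p) t ∧
        PadicInt.toZMod t = traceZmod p d x := by
  obtain ⟨ι, τ, hinj, hred⟩ := teich_exists p
  have hp := (Fact.out : p.Prime)
  let τ' : Omg p →*₀ PadicAlgCl p := ((OO (PadicAlgCl p)).subtype.toMonoidWithZeroHom).comp τ
  refine ⟨τ', Subtype.val_injective.comp hinj, ?_⟩
  intro d x hx
  have hτx : τ x ^ p ^ d = τ x := by rw [← map_pow, hx]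
  set t' : OO (PadicAlgCl p) := ∑ j ∈ Finset.range d, τ x ^ p ^ j with ht'
  have htt : ∑ j ∈ Finset.range d, τ' x ^ p ^ j = (t' : (PadicAlgCl p)) := by
    rw [ht']; push_cast; rfl
  -- fixed by Galois
  have hfix : ∀ σ : Gal((PadicAlgCl p)/ℚ_[p]), σ (t' : (PadicAlgCl p)) = t' := by
    intro σ
    rcases Nat.eq_zero_or_pos d with rfl | hd
    · simp [ht']
    have hiso : ∀ y : (PadicAlgCl p), ‖σ y‖ = ‖y‖ := fun y => by
      rw [← PadicAlgCl.spectralNorm_eq, ← PadicAlgCl.spectralNorm_eq]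
      exact (spectralNorm_eq_of_equiv σ y).symm
    let s : OO (PadicAlgCl p) := ⟨σ (τ x : (PadicAlgCl p)), by rw [mem_OO, hiso]; exact (τ x).2⟩
    have hs : s ^ p ^ d = s := by
      apply Subtype.ext
      change (σ (τ x : (PadicAlgCl p))) ^ p ^ d = σ (τ x : (PadicAlgCl p))
      rw [← map_pow]
      congr 1
      exact congrArg Subtype.val hτx
    obtain ⟨g, hg⟩ := frob_poly p d x hx
    have e1 : red (PadicAlgCl p) (Polynomial.aeval (τ x) g) = 0 := by
      have h1 : red (PadicAlgCl p) (Polynomial.aeval (τ x) g) = ι (Polynomial.aeval x g) := by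
        rw [Polynomial.aeval_def, Polynomial.aeval_def, Polynomial.hom_eval₂, Polynomial.hom_eval₂, hred]
        congr 1
        exact Subsingleton.elim _ _
      rw [h1]
      have h2 : Polynomial.aeval x g = (g.map (Int.castRingHom (Omg p))).eval x := by
        rw [Polynomial.eval_map, Polynomial.aeval_def]; rfl
      rw [h2, hg, Polynomial.eval_prod, Finset.prod_eq_zero (i := 0) (by simpa using hd) (by simp), map_zero]
    have e2 : red (PadicAlgCl p) (Polynomial.aeval s g) = 0 := by
      rw [red_zero] at e1 ⊢
      have h1 : ((Polynomial.aeval (τ x) g : OO (PadicAlgCl p)) : (PadicAlgCl p)) = Polynomial.aeval (τ x : (PadicAlgCl p)) g := by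
        exact (Polynomial.aeval_algebraMap_apply (PadicAlgCl p) (τ x) g).symm
      have h2 : ((Polynomial.aeval s g : OO (PadicAlgCl p)) : (PadicAlgCl p)) = Polynomial.aeval (s : (PadicAlgCl p)) g := by
        exact (Polynomial.aeval_algebraMap_apply (PadicAlgCl p) s g).symm
      have h3 : Polynomial.aeval (s : (PadicAlgCl p)) g = σ (Polynomial.aeval (τ x : (PadicAlgCl p)) g) := by
        rw [Polynomial.aeval_def, Polynomial.aeval_def]
        change _ = (σ : (PadicAlgCl p) →+* (PadicAlgCl p)) _
        rw [Polynomial.hom_eval₂]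
        congr 1
        exact Subsingleton.elim _ _
      rw [h2, h3, hiso, ← h1]; exact e1
    have e3 : red (PadicAlgCl p) (Polynomial.aeval s g) = ∏ j ∈ Finset.range d, (red (PadicAlgCl p) s - ι x ^ p ^ j) := by
      rw [Polynomial.aeval_def, Polynomial.hom_eval₂]
      have h1 := congrArg (fun P => Polynomial.eval (red (PadicAlgCl p) s) (Polynomial.map ι P)) hg
      simp only [Polynomial.map_map, Polynomial.map_prod, Polynomial.map_sub, Polynomial.map_C, Polynomial.map_X] at h1
      simp only [Polynomial.map_map, Polynomial.eval_map, Polynomial.eval_prod, Polynomial.eval_sub, Polynomial.eval_X, Polynomial.eval_C] at h1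
      simp only [map_pow] at h1
      rw [← h1]
      congr 1
      exact Subsingleton.elim _ _
    rw [e3, Finset.prod_eq_zero_iff] at e2
    obtain ⟨i, -, hi⟩ := e2
    have e4 : s = τ x ^ p ^ i := by
      refine teich_unique p d hd.ne' (norm_p_lt p) s _ hs ?_ ?_
      · rw [pow_right_comm, hτx]
      · rw [map_pow, hred]; exact sub_eq_zero.mp hi
    have e5 : ∑ j ∈ Finset.range d, s ^ p ^ j = t' := by
      rw [e4]; exact sum_frob p d (τ x) hτx i
    calc σ (t' : PadicAlgCl p) = ((∑ j ∈ Finset.range d, s ^ p ^ j : OO (PadicAlgCl p)) : PadicAlgCl p) := by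
          rw [ht']; push_cast; rw [map_sum]
          exact Finset.sum_congr rfl fun j _ => by rw [map_pow]
      _ = t' := by rw [e5]
  obtain ⟨t0, ht0⟩ : ∃ t0 : ℚ_[p], algebraMap ℚ_[p] (PadicAlgCl p) t0 = t' := by
    have := (InfiniteGalois.mem_bot_iff_fixed (k := ℚ_[p]) (t' : (PadicAlgCl p))).mpr hfix
    exact IntermediateField.mem_bot.mp this
  have hn0 : ‖t0‖ ≤ 1 := by
    rw [← PadicAlgCl.norm_extends p t0, ht0]; exact t'.2
  obtain ⟨t1, ht1⟩ : ∃ t1 : ℤ_[p], (t1 : ℚ_[p]) = t0 := ⟨⟨t0, hn0⟩, rfl⟩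
  refine ⟨t1, by rw [htt, ht1, ← ht0], ?_⟩
  set z := traceZmod p d x with hz
  have h1 : red (PadicAlgCl p) (t' - (z.val : OO (PadicAlgCl p))) = 0 := by
    rw [map_sub, ht', map_sum]
    simp only [map_pow, hred]
    have := traceZmod_spec p d x hx
    have h2 := congrArg ι this
    rw [map_sum] at h2
    simp only [map_pow] at h2
    rw [← h2, ← hz]
    have h4 : (algebraMap (ZMod p) (Omg p)) z = (z.val : Omg p) := by
      rw [← map_natCast (algebraMap (ZMod p) (Omg p)), ZMod.natCast_zmod_val]
    rw [h4, map_natCast, map_natCast, sub_self]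
  rw [red_zero] at h1
  have h2 : ‖t0 - (z.val : ℚ_[p])‖ < 1 := by
    rw [← PadicAlgCl.norm_extends p]
    rw [map_sub, ht0, map_natCast]
    exact h1
  have h3 : t1 - (z.val : ℤ_[p]) ∈ RingHom.ker (PadicInt.toZMod (p := p)) := by
    rw [PadicInt.ker_toZMod, IsLocalRing.mem_maximalIdeal, PadicInt.mem_nonunits, PadicInt.norm_def]
    push_cast
    rw [ht1]
    exact h2
  rw [RingHom.mem_ker, map_sub, sub_eq_zero, map_natCast] at h3
  rw [h3, ZMod.natCast_zmod_val]

theorem kk_charP' (p : ℕ) [Fact p.Prime] (L : Type*) [NormedField L] [IsUltrametricDist L]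
    (hpL : ‖(p : L)‖ < 1) : CharP (kk L) p := by
  refine (CharP.charP_iff_prime_eq_zero (Fact.out : p.Prime)).mpr ?_
  have : red L (p : OO L) = 0 := by
    rw [red_zero]; push_cast; exact hpL
  simpa using this

theorem zeta_near_one (p : ℕ) [Fact p.Prime] (L : Type*) [NormedField L] [IsUltrametricDist L]
    (hpL : ‖(p : L)‖ < 1) (ζ : L) (h : ζ ^ p = 1) : ‖ζ - 1‖ < 1 := by
  have hp := (Fact.out : p.Prime)
  have hn : ‖ζ‖ ≤ 1 := by
    have := congrArg norm h
    rw [norm_pow, norm_one] at this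
    exact (pow_eq_one_iff_of_nonneg (norm_nonneg _) hp.ne_zero).1 this |>.le
  let z : OO L := ⟨ζ, hn⟩
  have := kk_charP' p L hpL
  have hz : z ^ p = 1 := Subtype.ext h
  have h1 : (red L z - 1) ^ p = 0 := by
    rw [sub_pow_char, ← map_pow, hz, map_one, one_pow, sub_self]
  have h2 := pow_eq_zero_iff (hp.ne_zero) |>.1 h1
  rw [← map_one (red L), ← map_sub, red_zero] at h2
  exact h2

theorem pow_sub_pow_le {K : Type*} [NormedField K] [IsUltrametricDist K] (y z : K) (δ : ℝ) (hδ : 0 ≤ δ)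
    (hy : ‖y‖ ≤ δ) (hz : ‖z‖ ≤ δ) (i : ℕ) : ‖y ^ (i+1) - z ^ (i+1)‖ ≤ ‖y - z‖ * δ ^ i := by
  induction i with
  | zero => simp
  | succ i ih =>
    have : y ^ (i+1+1) - z ^ (i+1+1) = y * (y^(i+1) - z^(i+1)) + (y - z) * z^(i+1) := by ring
    rw [this]
    refine (IsUltrametricDist.norm_add_le_max _ _).trans (max_le ?_ ?_)
    · rw [norm_mul]
      calc ‖y‖ * ‖y^(i+1) - z^(i+1)‖ ≤ δ * (‖y - z‖ * δ ^ i) := by gcongr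
        _ = _ := by ring
    · rw [norm_mul, norm_pow]
      gcongr

theorem summable_of_norm_geo {K : Type*} [NormedField K] [CompleteSpace K] (a : ℕ → K) (ha : ∀ n, ‖a n‖ ≤ 1)
    (y : K) (hy : ‖y‖ < 1) : Summable (fun i => a i * y ^ i) := by
  refine Summable.of_norm_bounded (summable_geometric_of_lt_one (norm_nonneg y) hy) fun i => ?_
  rw [norm_mul, norm_pow]
  exact mul_le_of_le_one_left (by positivity) (ha i)

theorem dwork_pi {K : Type*} [NormedField K] [CompleteSpace K] [IsUltrametricDist K]
    (a : ℕ → K) (ha : ∀ n, ‖a n‖ ≤ 1) (h0 : a 0 = 1) (h1 : a 1 = 1) (ζ : K) (hζ : ‖ζ - 1‖ < 1) :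
    ∃ π : K, ‖π‖ < 1 ∧ ∑' i, a i * π ^ i = ζ := by
  set δ := ‖ζ - 1‖ with hδ
  have hδ0 : 0 ≤ δ := norm_nonneg _
  let b : ℕ → K := fun i => if i ≤ 1 then 0 else - a i
  have hb : ∀ n, ‖b n‖ ≤ 1 := by
    intro n; by_cases h : n ≤ 1 <;> simp [b, h, ha n]
  let g : K → K := fun y => (ζ - 1) + ∑' i, b i * y ^ i
  have hdiff : ∀ y z : K, ‖y‖ ≤ δ → ‖z‖ ≤ δ → ‖g y - g z‖ ≤ δ * ‖y - z‖ := by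
    intro y z hy hz
    have : g y - g z = ∑' i, b i * (y ^ i - z ^ i) := by
      simp only [g, add_sub_add_left_eq_sub, mul_sub]
      rw [Summable.tsum_sub (summable_of_norm_geo b hb y (hy.trans_lt hζ))
        (summable_of_norm_geo b hb z (hz.trans_lt hζ))]
    rw [this]
    refine IsUltrametricDist.norm_tsum_le_of_forall_le_of_nonneg (by positivity) fun i => ?_
    match i with
    | 0 => simp [b]; positivity
    | 1 => simp [b]; positivity
    | i+2 =>
      rw [norm_mul]
      calc ‖b (i+2)‖ * ‖y^(i+2) - z^(i+2)‖ ≤ 1 * (‖y - z‖ * δ ^ (i+1)) := by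
            gcongr
            · exact hb _
            · exact pow_sub_pow_le y z δ hδ0 hy hz (i+1)
        _ ≤ 1 * (‖y - z‖ * δ ^ 1) := by
            gcongr 1 * (‖y - z‖ * ?_)
            exact pow_le_pow_of_le_one hδ0 hζ.le (by omega)
        _ = _ := by ring
  have hg0 : g 0 = ζ - 1 := by
    simp only [g]
    have : (fun i => b i * (0:K) ^ i) = fun _ => 0 := by
      funext i
      rcases i with _ | i <;> simp [b]
    rw [this]; simp
  have hmaps : Set.MapsTo g (Metric.closedBall 0 δ) (Metric.closedBall 0 δ) := by
    intro y hy
    rw [mem_closedBall_zero_iff] at hy ⊢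
    have : g y = (g y - g 0) + (ζ - 1) := by rw [hg0]; ring
    rw [this]
    refine (IsUltrametricDist.norm_add_le_max _ _).trans (max_le ?_ le_rfl)
    refine (hdiff y 0 hy (by simpa using hδ0)).trans ?_
    rw [sub_zero]
    calc δ * ‖y‖ ≤ 1 * δ := by gcongr
      _ = δ := one_mul _
  have hcon : ContractingWith (⟨δ, hδ0⟩ : NNReal) (hmaps.restrict g _ _) := by
    refine ⟨by exact_mod_cast hζ, LipschitzWith.of_dist_le_mul fun y z => ?_⟩
    have := hdiff y z (mem_closedBall_zero_iff.1 y.2) (mem_closedBall_zero_iff.1 z.2)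
    rw [Subtype.dist_eq, Subtype.dist_eq, dist_eq_norm, dist_eq_norm]
    exact this
  obtain ⟨π, hπs, hfix, -⟩ := ContractingWith.exists_fixedPoint' (Metric.isClosed_closedBall.isComplete) hmaps hcon
    (x := 0) (by simpa using hδ0) (edist_ne_top _ _)
  rw [mem_closedBall_zero_iff] at hπs
  have hπ : ‖π‖ < 1 := hπs.trans_lt hζ
  refine ⟨π, hπ, ?_⟩
  have hs := (summable_of_norm_geo b hb π hπ).hasSum
  have e0 : HasSum (fun i : ℕ => if i = 0 then (1:K) else 0) 1 := hasSum_ite_eq 0 1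
  have e1 : HasSum (fun i : ℕ => if i = 1 then π else 0) π := hasSum_ite_eq 1 π
  have := ((e0.add e1).sub hs).tsum_eq
  have hf : g π = π := hfix
  simp only [g] at hf
  have h2 : (fun i => a i * π ^ i) = fun i => ((if i = 0 then (1:K) else 0) + if i = 1 then π else 0) - b i * π ^ i := by
    funext i
    match i with
    | 0 => simp [b, h0]
    | 1 => simp [b, h1]
    | i+2 => simp [b]
  rw [h2, this]
  linear_combination -hf

open PowerSeries in
theorem LD.map {K L : Type*} [Field K] [Field L] (i : K →+* L) {v : ℕ → K} {A : PowerSeries K} (h : LD v A) :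
    LD (fun m => i (v m)) (PowerSeries.map i A) := by
  refine ⟨by rw [coeff_map, h.1, map_one], ?_⟩
  have h2 := congrArg (PowerSeries.map i) h.2
  rw [map_mul, map_mul, map_neg, map_X] at h2
  have e1 : PowerSeries.map i (PowerSeries.derivative K A) = PowerSeries.derivative L (PowerSeries.map i A) := by
    ext n; simp [coeff_derivative]
  have e2 : PowerSeries.map i (mk (fun m => if m = 0 then 0 else v m)) = mk (fun m => if m = 0 then 0 else i (v m)) := by
    ext n; simp only [coeff_map, coeff_mk]; split_ifs <;> simp
  rw [e1, e2] at h2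
  exact h2

theorem coeff_mul_le_one {K : Type*} [NormedField K] [IsUltrametricDist K] (f g : PowerSeries K)
    (hf : ∀ n, ‖PowerSeries.coeff n f‖ ≤ 1) (hg : ∀ n, ‖PowerSeries.coeff n g‖ ≤ 1) (n : ℕ) :
    ‖PowerSeries.coeff n (f * g)‖ ≤ 1 := by
  rw [PowerSeries.coeff_mul]
  refine IsUltrametricDist.norm_sum_le_of_forall_le_of_nonneg zero_le_one fun x _ => ?_
  rw [norm_mul]
  exact mul_le_one₀ (hf _) (norm_nonneg _) (hg _)

theorem coeff_pow_le_one {K : Type*} [NormedField K] [IsUltrametricDist K] (f : PowerSeries K)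
    (hf : ∀ n, ‖PowerSeries.coeff n f‖ ≤ 1) (b n : ℕ) :
    ‖PowerSeries.coeff n (f ^ b)‖ ≤ 1 := by
  induction b generalizing n with
  | zero => 
    rw [pow_zero, PowerSeries.coeff_one]; split_ifs <;> simp
  | succ b ih => rw [pow_succ]; exact coeff_mul_le_one _ _ (fun n => ih n) hf n

open PowerSeries in
theorem splitting (p : ℕ) [Fact p.Prime] {K : Type*} [NormedField K] [CompleteSpace K] [IsUltrametricDist K]
    [CharZero K] (i : ℚ_[p] →+* K) (hi : ∀ x, ‖i x‖ = ‖x‖) (χ : AddChar (ZMod p) K) :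
    ∃ lam : ℕ → K, ∃ κ : ℝ, 0 < κ ∧ κ < 1 ∧ (∀ n, ‖lam n‖ ≤ κ ^ n) ∧ lam 0 = 1 ∧
      ∀ (d : ℕ) (y : K) (t : ℤ_[p]), y ^ p ^ d = y → ‖y‖ ≤ 1 → ∑ j ∈ Finset.range d, y ^ p ^ j = i t →
        χ (PadicInt.toZMod t) = ∏ j ∈ Finset.range d, ∑' n, lam n * (y ^ p ^ j) ^ n := by
  have hp := (Fact.out : p.Prime)
  have hpK : ‖(p : K)‖ < 1 := by
    rw [← map_natCast i, hi]; exact Padic.norm_p_lt_one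
  set ζ : K := χ 1 with hζ
  have hζp : ζ ^ p = 1 := by
    rw [hζ, ← AddChar.map_nsmul_eq_pow]; simp
  have hζ1 := zeta_near_one p K hpK ζ hζp
  let A0 : PowerSeries ℚ_[p] := mk (Eseq (ahv p ℚ_[p]))
  have hA0 : LD (ahv p ℚ_[p]) A0 := LD.exists' _
  let A : PowerSeries K := PowerSeries.map i A0
  have hA : LD (ahv p K) A := by
    refine hA0.map i |>.congr fun m _ => ?_
    simp only [ahv]; split_ifs <;> simp
  have hAn : ∀ n, ‖coeff n A‖ ≤ 1 := by
    intro n; rw [coeff_map, hi]; exact AH_int p A0 hA0 n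
  have hA1 : coeff 1 A = 1 := by
    have := hA.rec' 0
    have h1 : ahv p K 1 = -1 := by simp only [ahv]; rw [if_pos ⟨0, by simp⟩]
    simpa [h1, hA.1] using this
  obtain ⟨π, hπ, hπζ⟩ := dwork_pi (fun n => coeff n A) hAn hA.1 hA1 ζ hζ1
  have hres : ∀ (f : PowerSeries K), (∀ n, ‖coeff n f‖ ≤ 1) → ∀ y : K, ‖y‖ < 1 → SN (rescale y f) := by
    intro f hf y hy
    refine SN.of_bound 1 ‖y‖ (norm_nonneg _) hy fun n => ?_
    rw [coeff_rescale, norm_mul, norm_pow, mul_comm]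
    gcongr; exact hf n
  have hev : ∀ (f : PowerSeries K) (y : K), ev (rescale y f) = ∑' n, coeff n f * y ^ n := by
    intro f y
    simp only [ev, coeff_rescale, mul_comm]
  refine ⟨fun n => coeff n A * π ^ n, (1 + ‖π‖)/2, by positivity, by linarith, ?_, ?_, ?_⟩
  · intro n
    rw [norm_mul, norm_pow]
    calc ‖coeff n A‖ * ‖π‖ ^ n ≤ 1 * ((1 + ‖π‖)/2) ^ n := by
          gcongr
          · exact hAn n
          · linarith
      _ = _ := one_mul _
  · simp only [pow_zero, mul_one]; exact hA.1
  intro d y t hy hyn ht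
  let B : PowerSeries K := ∏ j ∈ Finset.range d, rescale (y ^ p ^ j) A
  have hB : LD (fun m => i t * ahv p K m) B := by
    refine (LD.prod (Finset.range d) (fun j _ => hA.rescale (y ^ p ^ j))).congr fun m _ => ?_
    simp only [ahv]
    split_ifs with h
    · obtain ⟨k, rfl⟩ := h
      rw [← ht, ← sum_frob p d y hy k, Finset.sum_mul]
      refine Finset.sum_congr rfl fun j _ => ?_
      rw [← pow_mul, ← pow_mul, mul_comm (p ^ j)]
    · simp
  have hBM : ∀ M, LD (fun m => (PadicInt.appr t M : K) * ahv p K m) (A ^ PadicInt.appr t M) := fun M => hA.pow _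
  have hlim : Filter.Tendsto (fun M => (PadicInt.appr t M : K)) Filter.atTop (nhds (i t)) := by
    rw [tendsto_iff_norm_sub_tendsto_zero]
    have hpR : Filter.Tendsto (fun M : ℕ => ((p:ℝ)⁻¹) ^ M) Filter.atTop (nhds 0) :=
      tendsto_pow_atTop_nhds_zero_of_lt_one (by positivity) (inv_lt_one_of_one_lt₀ (by exact_mod_cast hp.one_lt))
    refine squeeze_zero (fun _ => norm_nonneg _) (fun M => ?_) hpR
    have h1 := PadicInt.appr_spec M t
    rw [← PadicInt.norm_le_pow_iff_mem_span_pow] at h1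
    rw [norm_sub_rev, ← map_natCast i, ← map_sub, hi]
    have h2 : ‖((t : ℚ_[p]) - (PadicInt.appr t M : ℚ_[p]))‖ = ‖t - (PadicInt.appr t M : ℤ_[p])‖ := by
      rw [PadicInt.norm_def]; push_cast; rfl
    rw [h2]
    refine h1.trans_eq ?_
    rw [zpow_neg, inv_pow]; simp
  have hco : ∀ r, Filter.Tendsto (fun M => coeff r (A ^ PadicInt.appr t M)) Filter.atTop (nhds (coeff r B)) := by
    intro r
    refine LD.tendsto hB hBM (fun m _ => ?_) r
    exact hlim.mul_const _
  have hT : Filter.Tendsto (fun M => ev (rescale π (A ^ PadicInt.appr t M))) Filter.atTop (nhds (ev (rescale π B))) := by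
    refine tendsto_tsum_of_dominated_convergence (summable_geometric_of_lt_one (norm_nonneg π) hπ) (fun r => ?_)
      (Filter.Eventually.of_forall fun M r => ?_)
    · simp only [coeff_rescale]
      exact (hco r).const_mul _
    · rw [coeff_rescale, norm_mul, norm_pow]
      exact mul_le_of_le_one_right (by positivity) (coeff_pow_le_one A hAn _ r)
  have hζev : ev (rescale π A) = ζ := by rw [hev]; exact hπζ
  have hconst : ∀ᶠ M in Filter.atTop, ev (rescale π (A ^ PadicInt.appr t M)) = χ (PadicInt.toZMod t) := by
    filter_upwards [Filter.eventually_ge_atTop 1] with M hM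
    rw [map_pow, (SN.pow (hres A hAn π hπ) _).2, hζev, hζ, ← AddChar.map_nsmul_eq_pow]
    congr 1
    have h1 := PadicInt.appr_spec M t
    have h2 : t - (PadicInt.appr t M : ℤ_[p]) ∈ RingHom.ker (PadicInt.toZMod (p := p)) := by
      rw [PadicInt.ker_toZMod, PadicInt.maximalIdeal_eq_span_p]
      refine (Ideal.span_singleton_le_span_singleton.2 ?_) h1
      exact dvd_pow_self _ (by omega)
    rw [RingHom.mem_ker, map_sub, sub_eq_zero, map_natCast] at h2
    rw [h2]; simp
  have hfin := tendsto_nhds_unique (Filter.Tendsto.congr' hconst hT) tendsto_const_nhds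
  rw [← hfin]
  simp only [B, map_prod]
  have hrr : ∀ j, rescale π (rescale (y ^ p ^ j) A) = rescale (π * y ^ p ^ j) A := by
    intro j; rw [rescale_rescale, mul_comm]
  simp only [hrr]
  rw [(SN.prod (Finset.range d) (fun j => rescale (π * y ^ p ^ j) A) fun j _ => ?_).2]
  · refine Finset.prod_congr rfl fun j _ => ?_
    rw [hev]
    congr 1; funext n; rw [mul_pow]; ring
  · refine hres A hAn _ ?_
    rw [norm_mul, norm_pow]
    calc ‖π‖ * ‖y‖ ^ p ^ j ≤ ‖π‖ * 1 := by gcongr; exact pow_le_one₀ (norm_nonneg _) hyn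
      _ < 1 := by linarith

theorem dwork_split (p : ℕ) [Fact p.Prime] (χ : AddChar (ZMod p) ℂ_[p]) :
    ∃ τ : Omg p →*₀ ℂ_[p], ∃ lam : ℕ → ℂ_[p], ∃ κ : ℝ, Function.Injective τ ∧ (∀ x, ‖τ x‖ ≤ 1) ∧
      0 < κ ∧ κ < 1 ∧ (∀ n, ‖lam n‖ ≤ κ ^ n) ∧
      ∀ (d : ℕ) (x : Omg p), x ^ p ^ d = x →
        χ (traceZmod p d x) = ∏ j ∈ Finset.range d, ∑' n, lam n * (τ x ^ p ^ j) ^ n := by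
  have hp := (Fact.out : p.Prime)
  obtain ⟨τ, hτ, htr⟩ := teich_trace p
  let j : PadicAlgCl p →+* ℂ_[p] := algebraMap (PadicAlgCl p) ℂ_[p]
  let i : ℚ_[p] →+* ℂ_[p] := j.comp (algebraMap ℚ_[p] (PadicAlgCl p))
  have hi : ∀ x, ‖i x‖ = ‖x‖ := fun x => PadicComplex.norm_extends' p x
  obtain ⟨lam, κ, h0, h1, hl, -, hsp⟩ := splitting p i hi χ
  let τ' : Omg p →*₀ ℂ_[p] := j.toMonoidWithZeroHom.comp τ
  have hτ' : ∀ x, τ' x = j (τ x) := fun x => rfl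
  have hn : ∀ x, ‖τ' x‖ ≤ 1 := by
    intro x
    obtain ⟨d, hd, hx⟩ := omg_fix p x
    by_cases hx0 : x = 0
    · simp [hx0]
    · have h2 : τ' x ^ (p ^ d - 1) = 1 := by
        rw [← map_pow]
        have : x ^ (p ^ d - 1) * x = 1 * x := by
          rw [← pow_succ, Nat.sub_add_cancel (Nat.one_le_pow _ _ hp.pos), hx, one_mul]
        rw [mul_right_cancel₀ hx0 this, map_one]
      have := congrArg norm h2
      rw [norm_pow, norm_one] at this
      have h3 : p ^ d - 1 ≠ 0 := by have := Nat.one_lt_pow hd hp.one_lt; omega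
      exact ((pow_eq_one_iff_of_nonneg (norm_nonneg _) h3).1 this).le
  refine ⟨τ', lam, κ, ?_, hn, h0, h1, hl, ?_⟩
  · exact j.injective.comp hτ
  · intro d x hx
    obtain ⟨t, ht, ht2⟩ := htr d x hx
    rw [← ht2]
    refine hsp d (τ' x) t (by rw [← map_pow, hx]) (hn x) ?_
    have := congrArg j ht
    rw [map_sum] at this
    simp only [map_pow] at this
    exact this

/-- Gauss-type bound on the coefficients of a power series. -/
def GB {K : Type*} [NormedField K] (ρ b : ℝ) (f : PowerSeries K) : Prop :=
  ∀ r, ‖PowerSeries.coeff r f‖ * ρ ^ r ≤ b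

theorem GB.mul {K : Type*} [NormedField K] [IsUltrametricDist K] {ρ b c : ℝ} (hρ : 0 < ρ) (hb : 0 ≤ b) (hc : 0 ≤ c)
    {f g : PowerSeries K} (hf : GB ρ b f) (hg : GB ρ c g) : GB ρ (b * c) (f * g) := by
  intro r
  rw [← le_div_iff₀ (by positivity), PowerSeries.coeff_mul]
  refine IsUltrametricDist.norm_sum_le_of_forall_le_of_nonneg (by positivity) fun x hx => ?_
  rw [Finset.HasAntidiagonal.mem_antidiagonal] at hx
  rw [norm_mul, le_div_iff₀ (by positivity), ← hx, pow_add]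
  calc _ = (‖PowerSeries.coeff x.1 f‖ * ρ ^ x.1) * (‖PowerSeries.coeff x.2 g‖ * ρ ^ x.2) := by ring
    _ ≤ b * c := mul_le_mul (hf _) (hg _) (by positivity) hb

theorem GB.prod {K : Type*} [NormedField K] [IsUltrametricDist K] {ρ : ℝ} (hρ : 0 < ρ) {ι : Type*} (s : Finset ι)
    (b : ι → ℝ) (hb : ∀ i, 0 ≤ b i) (f : ι → PowerSeries K) (hf : ∀ i ∈ s, GB ρ (b i) (f i)) :
    GB ρ (∏ i ∈ s, b i) (∏ i ∈ s, f i) := by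
  induction s using Finset.induction_on with
  | empty =>
    intro r
    rcases r with _ | r
    · simp
    · simp [PowerSeries.coeff_one]
  | insert i s hi ih =>
    rw [Finset.prod_insert hi, Finset.prod_insert hi]
    exact GB.mul hρ (hb i) (Finset.prod_nonneg fun j _ => hb j) (hf i (Finset.mem_insert_self _ _))
      (ih fun j hj => hf j (Finset.mem_insert_of_mem hj))

theorem det_bound {K : Type*} [NormedField K] [IsUltrametricDist K] {N : Type*} [Fintype N] [DecidableEq N]
    (wt : N → ℕ) (U : Matrix N N K) (κ : ℝ) (h0 : 0 < κ)
    (hU : ∀ u v, ‖U u v‖ * κ ^ wt v ≤ κ ^ (2 * wt u)) (ρ : ℝ) (hρ : 0 < ρ) :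
    GB ρ (∏ u, max 1 (ρ * κ ^ wt u))
      (Matrix.det (1 - (PowerSeries.X : PowerSeries K) • U.map (PowerSeries.C (R := K)))) := by
  intro r
  rw [← le_div_iff₀ (by positivity), Matrix.det_apply, map_sum]
  refine IsUltrametricDist.norm_sum_le_of_forall_le_of_nonneg (by positivity) fun σ _ => ?_
  rw [le_div_iff₀ (by positivity)]
  have hs : ∀ f : PowerSeries K, ‖PowerSeries.coeff r (Equiv.Perm.sign σ • f)‖ = ‖PowerSeries.coeff r f‖ := by
    intro f
    rcases Int.units_eq_one_or (Equiv.Perm.sign σ) with h | h <;> rw [h] <;> simp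
  rw [hs]
  have key : ∀ v, GB ρ (κ ^ wt (σ v) / κ ^ wt v * max 1 (ρ * κ ^ wt (σ v)))
      ((1 - (PowerSeries.X : PowerSeries K) • U.map (PowerSeries.C (R := K))) (σ v) v) := by
    intro v r
    have e : (1 - (PowerSeries.X : PowerSeries K) • U.map (PowerSeries.C (R := K))) (σ v) v =
        PowerSeries.C ((1 : Matrix N N K) (σ v) v) - PowerSeries.C (U (σ v) v) * PowerSeries.X := by
      simp only [Matrix.sub_apply, Matrix.smul_apply, Matrix.map_apply, smul_eq_mul, Matrix.one_apply]
      rw [mul_comm]; split_ifs <;> simp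
    rw [e]
    match r with
    | 0 =>
      simp only [map_sub, PowerSeries.coeff_zero_C, PowerSeries.coeff_zero_mul_X, pow_zero, mul_one, sub_zero, Matrix.one_apply]
      split_ifs with h
      · rw [h, div_self (by positivity), norm_one, one_mul]; exact le_max_left _ _
      · rw [norm_zero]; positivity
    | 1 =>
      simp only [map_sub]
      rw [PowerSeries.coeff_C, if_neg one_ne_zero, show (1:ℕ) = 0 + 1 from rfl, PowerSeries.coeff_succ_mul_X,
        PowerSeries.coeff_zero_C, zero_sub, norm_neg]
      have h1 := hU (σ v) v
      rw [← le_div_iff₀ (by positivity)] at h1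
      calc ‖U (σ v) v‖ * ρ ^ (0+1) ≤ κ ^ (2 * wt (σ v)) / κ ^ wt v * ρ ^ (0+1) := by gcongr
        _ = κ ^ wt (σ v) / κ ^ wt v * (ρ * κ ^ wt (σ v)) := by ring
        _ ≤ _ := by gcongr; exact le_max_right _ _
    | r+2 =>
      simp only [map_sub]
      rw [PowerSeries.coeff_C, if_neg (by omega), PowerSeries.coeff_succ_mul_X, PowerSeries.coeff_C, if_neg (by omega)]
      simp; positivity
  have := GB.prod hρ Finset.univ _ (fun v => by positivity) _ (fun v _ => key v) r
  refine this.trans_eq ?_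
  rw [Finset.prod_mul_distrib, Finset.prod_div_distrib, Equiv.prod_comp σ (fun v => κ ^ wt v),
    Equiv.prod_comp σ (fun v => max 1 (ρ * κ ^ wt v)), div_self, one_mul]
  exact Finset.prod_ne_zero_iff.2 fun v _ => by positivity

theorem box_bound {ι : Type*} [Fintype ι] (κ ρ : ℝ) (h0 : 0 < κ) (h1 : κ < 1) (hρ : 0 < ρ) :
    ∃ B : ℝ, ∀ s : Finset (ι → ℤ), ∏ u ∈ s, max 1 (ρ * κ ^ (∑ i, (u i).natAbs)) ≤ B := by
  obtain ⟨H, hH⟩ := ((tendsto_pow_atTop_nhds_zero_of_lt_one h0.le h1).const_mul ρ).eventually_le_const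
    (show ρ * 0 < 1 by simp) |>.exists
  let b : Finset (ι → ℤ) := Fintype.piFinset fun _ => Finset.Icc (-(H:ℤ)) H
  refine ⟨∏ u ∈ b, max 1 (ρ * κ ^ (∑ i, (u i).natAbs)), fun s => ?_⟩
  calc _ ≤ ∏ u ∈ s ∪ b, max 1 (ρ * κ ^ (∑ i, (u i).natAbs)) := by
        rw [← Finset.prod_sdiff (Finset.subset_union_left (s₁ := s) (s₂ := b))]
        refine le_mul_of_one_le_left (Finset.prod_nonneg fun u _ => by positivity) ?_
        have := Finset.prod_le_prod (s := (s ∪ b) \ s) (f := fun _ => (1:ℝ))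
          (g := fun u => max 1 (ρ * κ ^ (∑ i, (u i).natAbs))) (fun _ _ => zero_le_one) (fun u _ => le_max_left _ _)
        simpa using this
    _ = _ := by
        symm
        refine Finset.prod_subset Finset.subset_union_right fun u _ hu => ?_
        rw [max_eq_left]
        have : H ≤ ∑ i, (u i).natAbs := by
          simp only [b, Fintype.mem_piFinset, not_forall, Finset.mem_Icc] at hu
          obtain ⟨i, hi⟩ := hu
          refine le_trans ?_ (Finset.single_le_sum (f := fun i => (u i).natAbs) (fun _ _ => Nat.zero_le _) (Finset.mem_univ i))
          show H ≤ (u i).natAbs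
          omega
        refine le_trans ?_ hH
        gcongr ρ * ?_
        exact pow_le_pow_of_le_one h0.le h1.le this

abbrev LP (K : Type*) [Field K] (ι : Type*) := AddMonoidAlgebra K (ι → ℤ)

def psi (K : Type*) [Field K] (ι : Type*) (q : ℕ) : LP K ι →+* LP K ι :=
  AddMonoidAlgebra.mapDomainRingHom K (DistribSMul.toAddMonoidHom (ι → ℤ) q)

theorem psi_single {K : Type*} [Field K] {ι : Type*} (q : ℕ) (u : ι → ℤ) (c : K) :
    psi K ι q (AddMonoidAlgebra.single u c) = AddMonoidAlgebra.single (q • u) c := by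
  simp [psi]

theorem coeff_mul_psi {K : Type*} [Field K] {ι : Type*} (q : ℕ) (F G : LP K ι) (k : ι → ℤ) :
    (F * psi K ι q G).coeff k = G.coeff.sum fun w c => F.coeff (k - q • w) * c := by
  induction G using AddMonoidAlgebra.induction_linear with
  | zero => simp
  | add x y hx hy =>
    rw [map_add, mul_add, AddMonoidAlgebra.coeff_add, AddMonoidAlgebra.coeff_add, Finsupp.add_apply, hx, hy,
      Finsupp.sum_add_index'] <;> simp [mul_add]
  | single u c => 
    rw [psi_single, AddMonoidAlgebra.coeff_mul_single_apply, AddMonoidAlgebra.coeff_single, Finsupp.sum_single_index (by simp),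
      sub_eq_add_neg]

def Gm {K : Type*} [Field K] {ι : Type*} (q : ℕ) (F : LP K ι) : ℕ → LP K ι
  | 0 => 1
  | m+1 => F * psi K ι q (Gm q F m)

theorem Gm_supp {K : Type*} [Field K] {ι : Type*} (q : ℕ) (hq : 2 ≤ q) (F : LP K ι) (R : ℤ) 
    (hF : ∀ u, F.coeff u ≠ 0 → ∀ i, |u i| ≤ R) (m : ℕ) (k : ι → ℤ) (hk : (Gm q F m).coeff k ≠ 0) (i : ι) :
    (q - 1) * |k i| ≤ R * (q ^ m - 1) := by
  induction m generalizing k with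
  | zero =>
    simp only [Gm, AddMonoidAlgebra.one_def, AddMonoidAlgebra.coeff_single, Finsupp.single_apply] at hk
    have : k = 0 := by by_contra h; exact hk (if_neg (Ne.symm h))
    subst this; simp
  | succ m ih =>
    rw [Gm, coeff_mul_psi] at hk
    obtain ⟨w, hw, h⟩ := Finset.exists_ne_zero_of_sum_ne_zero hk
    have h1 := ih w (Finsupp.mem_support_iff.1 hw)
    have h2 := hF _ (left_ne_zero_of_mul h) i
    have h3 : |k i| ≤ |(k - q • w) i| + q * |w i| := by
      calc |k i| = |(k - q • w) i + q * w i| := by simp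
        _ ≤ _ := (abs_add_le _ _).trans (by rw [abs_mul]; simp)
    have hq' : (2:ℤ) ≤ q := by exact_mod_cast hq
    calc ((q:ℤ) - 1) * |k i| ≤ (q - 1) * (R + q * |w i|) := by
          apply mul_le_mul_of_nonneg_left _ (by linarith)
          linarith
      _ = (q - 1) * R + q * ((q - 1) * |w i|) := by ring
      _ ≤ (q - 1) * R + q * (R * (q ^ m - 1)) := by
          have := mul_le_mul_of_nonneg_left h1 (show (0:ℤ) ≤ q by linarith)
          linarith
      _ = _ := by ring

def box (ι : Type*) [Fintype ι] (R : ℕ) : Finset (ι → ℤ) := Fintype.piFinset fun _ => Finset.Icc (-(R:ℤ)) R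

theorem mem_box {ι : Type*} [Fintype ι] (R : ℕ) (u : ι → ℤ) : u ∈ box ι R ↔ ∀ i, |u i| ≤ R := by
  simp [box, Fintype.mem_piFinset, abs_le]

def Umat {K : Type*} [Field K] {ι : Type*} [Fintype ι] (q : ℕ) (F : LP K ι) (R : ℕ) :
    Matrix (box ι R) (box ι R) K := fun u v => F.coeff (q • u.1 - v.1)

theorem sum_reindex {K : Type*} [Field K] {ι : Type*} (G : (ι → ℤ) →₀ K)
    (e : (ι → ℤ) ≃ (ι → ℤ)) (f : (ι → ℤ) → K) (b : Finset (ι → ℤ))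
    (h : ∀ w, w ∉ b → f w * G (e w) = 0) :
    (G.sum fun w c => f (e.symm w) * c) = ∑ w ∈ b, f w * G (e w) := by
  have h1 : (G.sum fun w c => f (e.symm w) * c) = ∑ w ∈ G.support.map e.symm.toEmbedding, f w * G (e w) := by
    rw [Finset.sum_map, Finsupp.sum]; simp
  rw [h1]
  rw [Finset.sum_subset (s₁ := b) (s₂ := b ∪ G.support.map e.symm.toEmbedding) Finset.subset_union_left (fun w _ hw => h w hw)]
  refine Finset.sum_subset Finset.subset_union_right fun w _ hw => ?_
  have : G (e w) = 0 := by
    by_contra h0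
    exact hw (Finset.mem_map.2 ⟨e w, Finsupp.mem_support_iff.2 h0, by simp⟩)
  rw [this, mul_zero]

theorem Umat_pow {K : Type*} [Field K] {ι : Type*} [Fintype ι] (q : ℕ) (hq : 2 ≤ q) (F : LP K ι) (R : ℕ)
    (hF : ∀ u, F.coeff u ≠ 0 → ∀ i, |u i| ≤ R) (m : ℕ) (u v : box ι R) :
    (Umat q F R ^ m) u v = (Gm q F m).coeff (q ^ m • u.1 - v.1) := by
  induction m generalizing v with
  | zero =>
    simp only [pow_zero, Gm, Matrix.one_apply, AddMonoidAlgebra.one_def, AddMonoidAlgebra.coeff_single, Finsupp.single_apply]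
    refine if_congr ?_ rfl rfl
    rw [one_smul, eq_comm (a := (0 : ι → ℤ)), sub_eq_zero, Subtype.ext_iff]
  | succ m ih =>
    rw [pow_succ, Matrix.mul_apply, Gm, coeff_mul_psi]
    have := sum_reindex (Gm q F m).coeff (Equiv.subLeft (q ^ m • u.1)) (fun w => F.coeff (q • w - v.1)) (box ι R) ?_
    · simp only [Equiv.subLeft_apply, Equiv.subLeft_symm_apply] at this
      trans ∑ w ∈ box ι R, F.coeff (q • w - v.1) * (Gm q F m).coeff (q ^ m • u.1 - w)
      · rw [← Finset.sum_coe_sort (box ι R)]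
        refine Finset.sum_congr rfl fun w _ => ?_
        rw [ih w, mul_comm]; rfl
      · rw [← this]
        refine Finset.sum_congr rfl fun w _ => ?_
        dsimp only
        congr 2
        rw [pow_succ']
        ext i; simp; ring
    · intro w hw
      by_cases h : F.coeff (q • w - v.1) = 0
      · simp only [h, zero_mul]
      exfalso
      apply hw
      rw [mem_box]
      intro i
      have h1 := hF _ h i
      have h2 := (mem_box R v.1).1 v.2 i
      have h3 : (q:ℤ) * |w i| ≤ |(q • w - v.1) i| + |v.1 i| := by
        calc (q:ℤ) * |w i| = |(q • w - v.1) i + v.1 i| := by simp [abs_mul]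
          _ ≤ _ := abs_add_le _ _
      have hq' : (2:ℤ) ≤ q := by exact_mod_cast hq
      nlinarith [abs_nonneg (w i)]

theorem Umat_trace {K : Type*} [Field K] {ι : Type*} [Fintype ι] (q : ℕ) (hq : 2 ≤ q) (F : LP K ι) (R : ℕ)
    (hF : ∀ u, F.coeff u ≠ 0 → ∀ i, |u i| ≤ R) (m : ℕ) :
    (Umat q F R ^ m).trace = ∑ u ∈ box ι R, (Gm q F m).coeff ((q ^ m - 1) • u) := by
  rw [← Finset.sum_coe_sort (box ι R), Matrix.trace]
  refine Finset.sum_congr rfl fun u _ => ?_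
  rw [Matrix.diag_apply, Umat_pow q hq F R hF]
  congr 1
  rw [← Nat.sub_add_cancel (Nat.one_le_pow m q (by omega)), add_smul]; simp

/-- evaluation of a Laurent polynomial at a point. -/
def evz {K : Type*} [Field K] {ι : Type*} [Fintype ι] (z : ι → Kˣ) : LP K ι →ₐ[K] K :=
  AddMonoidAlgebra.lift K K (ι → ℤ)
    { toFun := fun u => ((∏ i, z i ^ (Multiplicative.toAdd u) i : Kˣ) : K)
      map_one' := by simp
      map_mul' := fun u v => by simp [zpow_add, Finset.prod_mul_distrib] }

theorem evz_single {K : Type*} [Field K] {ι : Type*} [Fintype ι] (z : ι → Kˣ) (u : ι → ℤ) (c : K) :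
    evz z (AddMonoidAlgebra.single u c) = c * ∏ i, (z i : K) ^ u i := by
  simp [evz, AddMonoidAlgebra.lift_single]

theorem evz_sum {K : Type*} [Field K] {ι : Type*} [Fintype ι] (z : ι → Kˣ) (G : LP K ι) :
    evz z G = G.coeff.sum fun u c => c * ∏ i, (z i : K) ^ u i := by
  simp [evz, AddMonoidAlgebra.lift_apply]

theorem evz_psi {K : Type*} [Field K] {ι : Type*} [Fintype ι] (q : ℕ) (z : ι → Kˣ) (G : LP K ι) :
    evz z (psi K ι q G) = evz (fun i => z i ^ q) G := by
  induction G using AddMonoidAlgebra.induction_linear with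
  | zero => simp
  | add x y hx hy => simp [hx, hy]
  | single u c => 
    rw [psi_single, evz_single, evz_single]
    congr 1
    refine Finset.prod_congr rfl fun i _ => ?_
    rw [Units.val_pow_eq_pow_val, ← zpow_natCast, ← zpow_mul]; simp

theorem evz_Gm {K : Type*} [Field K] {ι : Type*} [Fintype ι] (q : ℕ) (F : LP K ι) (m : ℕ) (z : ι → Kˣ) :
    evz z (Gm q F m) = ∏ i ∈ Finset.range m, evz (fun j => z j ^ q ^ i) F := by
  induction m generalizing z with
  | zero => simp [Gm]
  | succ m ih =>
    rw [Gm, map_mul, evz_psi, ih, Finset.prod_range_succ']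
    simp only [pow_zero, pow_one]
    rw [mul_comm]
    congr 1
    refine Finset.prod_congr rfl fun i _ => ?_
    congr 2; funext j; rw [← pow_mul, pow_succ']

def XS (p : ℕ) [Fact p.Prime] (Q : ℕ) : Finset (Omg p) := Polynomial.nthRootsFinset (Q - 1) (1 : Omg p)

theorem mem_XS (p : ℕ) [Fact p.Prime] (Q : ℕ) (hQ : 2 ≤ Q) (x : Omg p) : x ∈ XS p Q ↔ x ^ Q = x ∧ x ≠ 0 := by
  rw [XS, Polynomial.mem_nthRootsFinset (by omega)]
  have e : x ^ Q = x ^ (Q - 1) * x := by rw [← pow_succ, Nat.sub_add_cancel (by omega)]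
  constructor
  · intro h
    refine ⟨by rw [e, h, one_mul], ?_⟩
    rintro rfl
    rw [zero_pow (by omega)] at h
    exact zero_ne_one h
  · rintro ⟨h, h0⟩
    rw [e] at h
    exact mul_right_cancel₀ h0 (h.trans (one_mul x).symm)

theorem XS_prim (p : ℕ) [Fact p.Prime] (d : ℕ) (hd : 1 ≤ d) : ∃ g : Omg p, IsPrimitiveRoot g (p ^ d - 1) := by
  have hp := (Fact.out : p.Prime)
  have h2 : 1 < p ^ d := Nat.one_lt_pow (by omega) hp.one_lt
  have : NeZero ((p ^ d - 1 : ℕ) : Omg p) := ⟨by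
    rw [Nat.cast_sub h2.le, Nat.cast_pow, CharP.cast_eq_zero, zero_pow (by omega)]; simp⟩
  have : NeZero (p ^ d - 1) := ⟨by omega⟩
  exact HasEnoughRootsOfUnity.exists_primitiveRoot (Omg p) (p ^ d - 1)

theorem XS_sum (p : ℕ) [Fact p.Prime] {K : Type*} [Field K] (τ : Omg p →*₀ K) (hτ : Function.Injective τ)
    (d : ℕ) (hd : 1 ≤ d) (u : ℤ) :
    ∑ x ∈ XS p (p ^ d), τ x ^ u = if ((p ^ d - 1 : ℕ) : ℤ) ∣ u then ((p ^ d - 1 : ℕ) : K) else 0 := by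
  have hp := (Fact.out : p.Prime)
  have h2 : 1 < p ^ d := Nat.one_lt_pow (by omega) hp.one_lt
  obtain ⟨g, hg⟩ := XS_prim p d hd
  have hg0 : g ≠ 0 := hg.ne_zero (by omega)
  split_ifs with h
  · have : ∀ x ∈ XS p (p ^ d), τ x ^ u = 1 := by
      intro x hx
      rw [XS, Polynomial.mem_nthRootsFinset (by omega)] at hx
      obtain ⟨c, rfl⟩ := h
      rw [zpow_mul, zpow_natCast, ← map_pow, hx, map_one, one_zpow]
    rw [Finset.sum_congr rfl this, Finset.sum_const, nsmul_one, XS, hg.card_nthRootsFinset]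
  · have h1 : ∑ x ∈ XS p (p ^ d), τ x ^ u = τ g ^ u * ∑ x ∈ XS p (p ^ d), τ x ^ u := by
      rw [Finset.mul_sum]
      symm
      refine Finset.sum_bij (fun x _ => g * x) ?_ ?_ ?_ ?_
      · intro x hx
        rw [XS, Polynomial.mem_nthRootsFinset (by omega)] at hx ⊢
        rw [mul_pow, hg.pow_eq_one, hx, one_mul]
      · intro x _ y _ hxy; exact mul_left_cancel₀ hg0 hxy
      · intro x hx
        refine ⟨g⁻¹ * x, ?_, by rw [mul_inv_cancel_left₀ hg0]⟩
        rw [XS, Polynomial.mem_nthRootsFinset (by omega)] at hx ⊢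
        rw [mul_pow, inv_pow, hg.pow_eq_one, hx, inv_one, one_mul]
      · intro x _; rw [map_mul, mul_zpow]
    have h3 : τ g ^ u ≠ 1 := by
      rw [← map_zpow₀, ← map_one τ]
      intro h4
      exact h ((hg.zpow_eq_one_iff_dvd u).1 (hτ h4))
    have h5 : (τ g ^ u - 1) * ∑ x ∈ XS p (p ^ d), τ x ^ u = 0 := by rw [sub_mul, ← h1]; ring
    exact (mul_eq_zero.1 h5).resolve_left (sub_ne_zero.2 h3)

def tu {p : ℕ} [Fact p.Prime] {K : Type*} [Field K] (τ : Omg p →*₀ K) (x : Omg p) : Kˣ :=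
  if h : τ x = 0 then 1 else Units.mk0 (τ x) h

theorem tu_val {p : ℕ} [Fact p.Prime] {K : Type*} [Field K] (τ : Omg p →*₀ K) (x : Omg p) (hx : x ≠ 0) :
    (tu τ x : K) = τ x := by
  have : τ x ≠ 0 := (map_ne_zero τ).2 hx
  simp [tu, this]

theorem torus_sum (p : ℕ) [Fact p.Prime] {K : Type*} [Field K] (τ : Omg p →*₀ K) (hτ : Function.Injective τ)
    (d : ℕ) (hd : 1 ≤ d) {ι : Type*} [Fintype ι] [DecidableEq ι] (G : LP K ι) (R : ℕ)
    (hG : ∀ k, G.coeff k ≠ 0 → ∀ i, |k i| ≤ R * ((p ^ d - 1 : ℕ) : ℤ)) :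
    ∑ x ∈ Fintype.piFinset (fun _ : ι => XS p (p ^ d)), evz (fun i => tu τ (x i)) G =
      ((p ^ d - 1 : ℕ) : K) ^ Fintype.card ι * ∑ u ∈ box ι R, G.coeff ((p ^ d - 1) • u) := by
  have hp := (Fact.out : p.Prime)
  have h2 : 1 < p ^ d := Nat.one_lt_pow (by omega) hp.one_lt
  set Q := p ^ d - 1 with hQ
  have hQ0 : 0 < Q := by omega
  have step1 : ∑ x ∈ Fintype.piFinset (fun _ : ι => XS p (p ^ d)), evz (fun i => tu τ (x i)) G =
      ∑ k ∈ G.coeff.support, G.coeff k * ∏ i, (if (Q:ℤ) ∣ k i then (Q : K) else 0) := by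
    simp only [evz_sum, Finsupp.sum]
    rw [Finset.sum_comm]
    refine Finset.sum_congr rfl fun k _ => ?_
    rw [← Finset.mul_sum]
    congr 1
    simp only [hQ]
    rw [Finset.prod_congr rfl fun i _ => (XS_sum p τ hτ d hd (k i)).symm, Finset.prod_univ_sum]
    refine Finset.sum_congr rfl fun x hx => Finset.prod_congr rfl fun i _ => ?_
    rw [tu_val]
    exact ((mem_XS p _ h2 _).1 (Fintype.mem_piFinset.1 hx i)).2
  rw [step1, Finset.mul_sum]
  symm
  refine Finset.sum_bij_ne_zero (fun u _ _ => Q • u) ?_ ?_ ?_ ?_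
  · intro u _ h
    exact Finsupp.mem_support_iff.2 (right_ne_zero_of_mul h)
  · intro u _ _ v _ _ h
    funext i
    have := congrFun h i
    simp at this
    omega
  · intro k hk h
    have hdvd : ∀ i, (Q:ℤ) ∣ k i := by
      intro i
      by_contra hn
      exact Finset.prod_ne_zero_iff.1 (right_ne_zero_of_mul h) i (Finset.mem_univ i) (if_neg hn)
    choose u hu using hdvd
    have hku : k = Q • u := by funext i; simp [hu]
    refine ⟨u, ?_, ?_, hku.symm⟩
    · rw [mem_box]
      intro i
      have := hG k (Finsupp.mem_support_iff.1 hk) i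
      rw [hu, abs_mul, Nat.abs_cast, mul_comm] at this
      exact le_of_mul_le_mul_right this (by exact_mod_cast hQ0)
    · rw [← hku]
      have : ∏ i, (if (Q:ℤ) ∣ k i then (Q : K) else 0) = (Q:K) ^ Fintype.card ι := by
        rw [Finset.prod_congr rfl fun i _ => if_pos ⟨u i, hu i⟩]; simp
      rw [this, mul_comm] at h
      exact h
  · intro u _ _
    have : ∏ i, (if (Q:ℤ) ∣ (Q • u) i then (Q : K) else 0) = (Q:K) ^ Fintype.card ι := by
      rw [Finset.prod_congr rfl fun i _ => if_pos ⟨u i, by simp⟩]; simp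
    rw [this, mul_comm]

/-- coefficient decay. -/
def Bd {K : Type*} [NormedField K] {ι : Type*} [Fintype ι] (κ : ℝ) (F : LP K ι) : Prop :=
  ∀ u, ‖F.coeff u‖ ≤ κ ^ (∑ i, (u i).natAbs)

theorem Bd.mul {K : Type*} [NormedField K] [IsUltrametricDist K] {ι : Type*} [Fintype ι] {κ : ℝ} (h0 : 0 < κ) (h1 : κ < 1)
    {F G : LP K ι} (hF : Bd κ F) (hG : Bd κ G) : Bd κ (F * G) := by
  intro u
  rw [AddMonoidAlgebra.coeff_mul_apply_right, Finsupp.sum]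
  refine IsUltrametricDist.norm_sum_le_of_forall_le_of_nonneg (by positivity) fun w _ => ?_
  rw [norm_mul]
  calc _ ≤ κ ^ (∑ i, ((u + -w) i).natAbs) * κ ^ (∑ i, (w i).natAbs) := mul_le_mul (hF _) (hG _) (norm_nonneg _) (by positivity)
    _ ≤ _ := by
      rw [← pow_add]
      refine pow_le_pow_of_le_one h0.le h1.le ?_
      rw [← Finset.sum_add_distrib]
      refine Finset.sum_le_sum fun i _ => ?_
      simp only [Pi.add_apply, Pi.neg_apply]
      omega

theorem Bd.one {K : Type*} [NormedField K] {ι : Type*} [Fintype ι] {κ : ℝ} (h0 : 0 < κ) : Bd κ (1 : LP K ι) := by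
  intro u
  rw [AddMonoidAlgebra.one_def, AddMonoidAlgebra.coeff_single, Finsupp.single_apply]
  split_ifs with h
  · subst h; simp
  · rw [norm_zero]; positivity

theorem Bd.prod {K : Type*} [NormedField K] [IsUltrametricDist K] {ι : Type*} [Fintype ι] {κ : ℝ} (h0 : 0 < κ) (h1 : κ < 1)
    {J : Type*} (s : Finset J) (F : J → LP K ι) (hF : ∀ j ∈ s, Bd κ (F j)) : Bd κ (∏ j ∈ s, F j) := by
  induction s using Finset.induction_on with
  | empty => simpa using Bd.one h0
  | insert i s hi ih =>
    rw [Finset.prod_insert hi]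
    exact (hF i (Finset.mem_insert_self _ _)).mul h0 h1 (ih fun j hj => hF j (Finset.mem_insert_of_mem hj))

theorem Bd.sum_single {K : Type*} [NormedField K] [IsUltrametricDist K] {ι : Type*} [Fintype ι] {κ κ' : ℝ} (h0 : 0 < κ') (h1 : κ' < 1)
    (D : ℕ) (hD : κ ≤ κ' ^ D) (hκ : 0 < κ) (M : ℕ) (ν : ι → ℤ) (hν : ∑ i, (ν i).natAbs ≤ D) (lam : ℕ → K)
    (hlam : ∀ n, ‖lam n‖ ≤ κ ^ n) (c : ℕ → K) (hc : ∀ n, ‖c n‖ ≤ 1) :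
    Bd κ' (∑ n ∈ Finset.range M, AddMonoidAlgebra.single (n • ν) (lam n * c n)) := by
  intro u
  rw [AddMonoidAlgebra.coeff_sum, Finsupp.finsetSum_apply]
  refine IsUltrametricDist.norm_sum_le_of_forall_le_of_nonneg (by positivity) fun n _ => ?_
  rw [AddMonoidAlgebra.coeff_single, Finsupp.single_apply]
  split_ifs with h
  · subst h
    rw [norm_mul]
    calc _ ≤ κ ^ n * 1 := mul_le_mul (hlam n) (hc n) (norm_nonneg _) (by positivity)
      _ ≤ (κ' ^ D) ^ n := by rw [mul_one]; gcongr
      _ ≤ _ := by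
        rw [← pow_mul]
        refine pow_le_pow_of_le_one h0.le h1.le ?_
        calc _ = n * ∑ i, (ν i).natAbs := by
              rw [Finset.mul_sum]; refine Finset.sum_congr rfl fun i _ => ?_
              simp [Int.natAbs_mul]
          _ ≤ D * n := by rw [mul_comm]; gcongr
  · rw [norm_zero]; positivity

theorem exists_supp {K : Type*} [Field K] {ι : Type*} [Fintype ι] (F : LP K ι) :
    ∃ R : ℕ, ∀ u, F.coeff u ≠ 0 → ∀ i, |u i| ≤ R := by
  refine ⟨∑ u ∈ F.coeff.support, ∑ i, (u i).natAbs, fun u hu i => ?_⟩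
  have h1 : (u i).natAbs ≤ ∑ i, (u i).natAbs :=
    Finset.single_le_sum (f := fun i => (u i).natAbs) (fun _ _ => Nat.zero_le _) (Finset.mem_univ i)
  have h2 := Finset.single_le_sum (f := fun u : ι → ℤ => ∑ i, (u i).natAbs) (fun _ _ => Nat.zero_le _) (Finsupp.mem_support_iff.2 hu)
  have := h1.trans h2
  rw [Int.abs_eq_natAbs]; exact_mod_cast this

theorem prod_range_mul' {R : Type*} [CommMonoid R] (g : ℕ → R) (a m : ℕ) :
    ∏ j ∈ Finset.range (a * m), g j = ∏ i ∈ Finset.range m, ∏ l ∈ Finset.range a, g (a * i + l) := by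
  induction m with
  | zero => simp
  | succ m ih => rw [mul_add, mul_one, Finset.prod_range_add, Finset.prod_range_succ, ih]

theorem trace_add (p : ℕ) [Fact p.Prime] (d : ℕ) {E : Type*} (s : Finset E) (y : E → Omg p) (hy : ∀ e ∈ s, y e ^ p ^ d = y e) :
    (∑ e ∈ s, y e) ^ p ^ d = ∑ e ∈ s, y e ∧ traceZmod p d (∑ e ∈ s, y e) = ∑ e ∈ s, traceZmod p d (y e) := by
  have h1 : ∀ j, (∑ e ∈ s, y e) ^ p ^ j = ∑ e ∈ s, y e ^ p ^ j := fun j => sum_pow_char_pow p j s y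
  have h2 : (∑ e ∈ s, y e) ^ p ^ d = ∑ e ∈ s, y e := by
    rw [h1]; exact Finset.sum_congr rfl hy
  refine ⟨h2, (algebraMap (ZMod p) (Omg p)).injective ?_⟩
  rw [traceZmod_spec p d _ h2, map_sum, Finset.sum_congr rfl fun e he => traceZmod_spec p d (y e) (hy e he), Finset.sum_comm]
  exact Finset.sum_congr rfl fun j _ => h1 j

def FM {p : ℕ} [Fact p.Prime] {K : Type*} [Field K] {ι E : Type*} [Fintype E] (a : ℕ)
    (τ : Omg p →*₀ K) (lam : ℕ → K) (c : E → Omg p) (ν : E → ι → ℤ) (M : ℕ) : LP K ι :=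
  ∏ l ∈ Finset.range a, ∏ e, ∑ n ∈ Finset.range M,
    AddMonoidAlgebra.single (n • (p ^ l • ν e)) (lam n * (τ (c e) ^ p ^ l) ^ n)

theorem evz_FM {p : ℕ} [Fact p.Prime] {K : Type*} [Field K] {ι E : Type*} [Fintype ι] [Fintype E] (a : ℕ)
    (τ : Omg p →*₀ K) (lam : ℕ → K) (c : E → Omg p) (hc : ∀ e, c e ^ p ^ a = c e) (ν : E → ι → ℤ) (M i : ℕ)
    (x : ι → Omg p) (hx : ∀ i, x i ≠ 0) :
    evz (fun j => tu τ (x j) ^ (p ^ a) ^ i) (FM a τ lam c ν M) =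
      ∏ l ∈ Finset.range a, ∏ e, ∑ n ∈ Finset.range M,
        lam n * (τ (c e * ∏ j, x j ^ ν e j) ^ p ^ (a * i + l)) ^ n := by
  simp only [FM, map_prod, map_sum, evz_single]
  refine Finset.prod_congr rfl fun l _ => Finset.prod_congr rfl fun e _ => Finset.sum_congr rfl fun n _ => ?_
  rw [mul_assoc, map_mul, mul_pow, mul_pow]
  congr 2
  · have : c e ^ p ^ (a * i + l) = c e ^ p ^ l := by
      rw [pow_add, pow_mul, pow_fix_mul p a i _ (hc e)]
    have this' := congrArg τ this
    simp only [map_pow] at this'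
    rw [this']
  · rw [map_prod, ← Finset.prod_pow, ← Finset.prod_pow]
    refine Finset.prod_congr rfl fun j _ => ?_
    rw [Units.val_pow_eq_pow_val, tu_val τ _ (hx j), map_zpow₀, ← zpow_natCast, ← zpow_natCast, ← zpow_natCast,
      ← zpow_mul, ← zpow_mul, ← zpow_mul]
    congr 1
    rw [Pi.smul_apply, Pi.smul_apply, nsmul_eq_mul, nsmul_eq_mul]
    push_cast
    rw [pow_add, pow_mul]; ring

theorem addChar_sum {A K E : Type*} [AddCommMonoid A] [CommMonoid K] (χ : AddChar A K) (s : Finset E) (g : E → A) :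
    χ (∑ e ∈ s, g e) = ∏ e ∈ s, χ (g e) := by
  induction s using Finset.induction_on with
  | empty => simp
  | insert i s hi ih => rw [Finset.sum_insert hi, Finset.prod_insert hi, AddChar.map_add_eq_mul, ih]

theorem trace_entire (p a : ℕ) [Fact p.Prime] (ha : 1 ≤ a) (χ : AddChar (ZMod p) ℂ_[p])
    {ι E : Type*} [Fintype ι] [DecidableEq ι] [Fintype E] (c : E → Omg p) (hc : ∀ e, c e ^ p ^ a = c e) (ν : E → ι → ℤ) :
    ∃ v A, LD v A ∧ (∀ m, 1 ≤ m →
      ∑ x ∈ Fintype.piFinset (fun _ : ι => XS p (p ^ (a * m))),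
        χ (traceZmod p (a * m) (∑ e, c e * ∏ i, x i ^ ν e i)) =
      (((p:ℂ_[p]) ^ a) ^ m - 1) ^ Fintype.card ι * v m) ∧
      ∀ ρ : ℝ, 0 < ρ → ∃ B : ℝ, ∀ r, ‖PowerSeries.coeff r A‖ * ρ ^ r ≤ B := by
  have hp := (Fact.out : p.Prime)
  have hq2 : 2 ≤ p ^ a := Nat.one_lt_pow (by omega) hp.one_lt
  obtain ⟨τ, lam, κ, hτ, hτn, h0, h1, hlam, hsp⟩ := dwork_split p χ
  -- decay constant
  let D : ℕ := (∑ l ∈ Finset.range a, ∑ e, ∑ i, ((p ^ l • ν e) i).natAbs) + 1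
  let κ' : ℝ := κ ^ ((D:ℝ)⁻¹)
  have hk0 : 0 < κ' := Real.rpow_pos_of_pos h0 _
  have hD0 : D ≠ 0 := by simp [D]
  have hk1 : κ' < 1 := Real.rpow_lt_one h0.le h1 (by positivity)
  have hkD : κ ≤ κ' ^ D := (Real.rpow_inv_natCast_pow h0.le hD0).ge
  let F : ℕ → LP ℂ_[p] ι := FM a τ lam c ν
  have hFB : ∀ M, Bd κ' (F M) := by
    intro M
    refine Bd.prod hk0 hk1 _ _ fun l hl => Bd.prod hk0 hk1 _ _ fun e _ => ?_
    refine Bd.sum_single hk0 hk1 D hkD h0 M _ ?_ lam hlam (fun n => (τ (c e) ^ p ^ l) ^ n) ?_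
    · have e1 := Finset.single_le_sum (f := fun l => ∑ e, ∑ i, ((p ^ l • ν e) i).natAbs) (fun _ _ => Nat.zero_le _) hl
      have e2 := Finset.single_le_sum (f := fun e => ∑ i, ((p ^ l • ν e) i).natAbs) (fun _ _ => Nat.zero_le _) (Finset.mem_univ e)
      exact (e2.trans e1).trans (Nat.le_succ _)
    · intro n
      rw [norm_pow, norm_pow]
      exact pow_le_one₀ (by positivity) (pow_le_one₀ (norm_nonneg _) (hτn _))
  choose Rs hRs using fun M => exists_supp (F M)
  let v : ℕ → ℂ_[p] := fun m => (∑ x ∈ Fintype.piFinset (fun _ : ι => XS p (p ^ (a * m))),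
        χ (traceZmod p (a * m) (∑ e, c e * ∏ i, x i ^ ν e i))) / (((p:ℂ_[p]) ^ a) ^ m - 1) ^ Fintype.card ι
  have hcast : ∀ m, ((p ^ (a * m) - 1 : ℕ) : ℂ_[p]) = ((p:ℂ_[p]) ^ a) ^ m - 1 := by
    intro m
    rw [Nat.cast_sub (Nat.one_le_pow _ _ hp.pos)]; push_cast; rw [pow_mul]
  have hne : ∀ m, 1 ≤ m → (((p:ℂ_[p]) ^ a) ^ m - 1) ^ Fintype.card ι ≠ 0 := by
    intro m hm
    refine pow_ne_zero _ ?_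
    rw [← hcast]
    have : 1 < p ^ (a * m) := Nat.one_lt_pow (by positivity) hp.one_lt
    exact_mod_cast (by omega : p ^ (a * m) - 1 ≠ 0)
  let w : ℕ → ℕ → ℂ_[p] := fun M m => ((Umat (p ^ a) (F M) (Rs M)) ^ m).trace
  let BM : ℕ → PowerSeries ℂ_[p] := fun M =>
    Matrix.det (1 - (PowerSeries.X : PowerSeries ℂ_[p]) • (Umat (p ^ a) (F M) (Rs M)).map (PowerSeries.C (R := ℂ_[p])))
  have hBM : ∀ M, LD (w M) (BM M) := fun M => LD.matrix _
  have htrace : ∀ M m, 1 ≤ m → ∑ x ∈ Fintype.piFinset (fun _ : ι => XS p (p ^ (a * m))),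
      evz (fun i => tu τ (x i)) (Gm (p ^ a) (F M) m) = (((p:ℂ_[p]) ^ a) ^ m - 1) ^ Fintype.card ι * w M m := by
    intro M m hm
    have hd : 1 ≤ a * m := Nat.one_le_iff_ne_zero.2 (by positivity)
    rw [torus_sum p τ hτ (a * m) hd (Gm (p ^ a) (F M) m) (Rs M), hcast]
    · congr 1
      simp only [w]
      rw [Umat_trace (p ^ a) hq2 (F M) (Rs M) (hRs M) m, ← pow_mul]
    · intro k hk i
      have := Gm_supp (p ^ a) hq2 (F M) (Rs M) (hRs M) m k hk i
      rw [Nat.cast_sub (Nat.one_le_pow _ _ hp.pos), pow_mul]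
      push_cast at this ⊢
      refine le_trans ?_ this
      refine le_mul_of_one_le_left (abs_nonneg _) ?_
      have : (2:ℤ) ≤ (p:ℤ) ^ a := by exact_mod_cast hq2
      linarith
  have hlimv : ∀ m, 1 ≤ m → Filter.Tendsto (fun M => w M m) Filter.atTop (nhds (v m)) := by
    intro m hm
    have e : (fun M => w M m) = fun M => (∑ x ∈ Fintype.piFinset (fun _ : ι => XS p (p ^ (a * m))),
      evz (fun i => tu τ (x i)) (Gm (p ^ a) (F M) m)) / (((p:ℂ_[p]) ^ a) ^ m - 1) ^ Fintype.card ι := by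
      funext M
      rw [htrace M m hm, mul_div_cancel_left₀ _ (hne m hm)]
    rw [e]
    refine Filter.Tendsto.div_const (tendsto_finsetSum _ fun x hx => ?_) _
    have hQ : 2 ≤ p ^ (a * m) := Nat.one_lt_pow (by positivity) hp.one_lt
    have hx' : ∀ i, x i ^ p ^ (a * m) = x i ∧ x i ≠ 0 := fun i =>
      (mem_XS p _ hQ _).1 (Fintype.mem_piFinset.1 hx i)
    have hy : ∀ e ∈ Finset.univ, (c e * ∏ i, x i ^ ν e i) ^ p ^ (a * m) = c e * ∏ i, x i ^ ν e i := by
      intro e _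
      rw [mul_pow, pow_fix_mul p a m _ (hc e), ← Finset.prod_pow]
      congr 1
      refine Finset.prod_congr rfl fun i _ => ?_
      rw [← zpow_natCast, ← zpow_mul, mul_comm, zpow_mul, zpow_natCast, (hx' i).1]
    rw [(trace_add p (a * m) Finset.univ _ hy).2]
    have hχ : χ (∑ e, traceZmod p (a * m) (c e * ∏ i, x i ^ ν e i)) =
        ∏ e, χ (traceZmod p (a * m) (c e * ∏ i, x i ^ ν e i)) := addChar_sum _ _ _
    rw [hχ]
    have e2 : ∏ e, χ (traceZmod p (a * m) (c e * ∏ i, x i ^ ν e i)) =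
        ∏ i ∈ Finset.range m, ∏ l ∈ Finset.range a, ∏ e, ∑' n,
          lam n * (τ (c e * ∏ j, x j ^ ν e j) ^ p ^ (a * i + l)) ^ n := by
      rw [Finset.prod_congr rfl fun e he => hsp (a * m) _ (hy e he), Finset.prod_comm]
      exact prod_range_mul' (fun j => ∏ e, ∑' n, lam n * (τ (c e * ∏ j, x j ^ ν e j) ^ p ^ j) ^ n) a m
    rw [e2]
    simp only [evz_Gm]
    refine tendsto_finsetProd _ fun i _ => ?_
    simp only [F]
    simp only [evz_FM a τ lam c hc ν _ i x (fun i => (hx' i).2)]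
    refine tendsto_finsetProd _ fun l _ => tendsto_finsetProd _ fun e _ => ?_
    refine HasSum.tendsto_sum_nat (Summable.hasSum ?_)
    refine Summable.of_norm_bounded (summable_geometric_of_lt_one h0.le h1) fun n => ?_
    rw [norm_mul, norm_pow, norm_pow]
    calc _ ≤ κ ^ n * 1 := by
          refine mul_le_mul (hlam n) ?_ (by positivity) (by positivity)
          exact pow_le_one₀ (by positivity) (pow_le_one₀ (norm_nonneg _) (hτn _))
      _ = _ := mul_one _
  have hA := LD.exists' v
  refine ⟨v, _, hA, ?_, ?_⟩
  · intro m hm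
    simp only [v]
    rw [mul_div_cancel₀ _ (hne m hm)]
  · intro ρ hρ
    obtain ⟨B, hB⟩ := box_bound (ι := ι) κ' ρ hk0 hk1 hρ
    refine ⟨B, fun r => ?_⟩
    have ht := ((LD.tendsto hA hBM hlimv r).norm).mul_const (ρ ^ r)
    refine le_of_tendsto ht (Filter.Eventually.of_forall fun M => ?_)
    refine (det_bound (fun u : box ι (Rs M) => ∑ i, (u.1 i).natAbs) (Umat (p ^ a) (F M) (Rs M)) κ' hk0 ?_ ρ hρ r).trans ?_
    · intro u v
      calc _ ≤ κ' ^ (∑ i, (((p ^ a) • u.1 - v.1) i).natAbs) * κ' ^ (∑ i, (v.1 i).natAbs) := by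
            gcongr
            exact hFB M _
        _ ≤ _ := by
            rw [← pow_add]
            refine pow_le_pow_of_le_one hk0.le hk1.le ?_
            rw [← Finset.sum_add_distrib, Finset.mul_sum]
            refine Finset.sum_le_sum fun i _ => ?_
            have e1 : (((p ^ a) • u.1) i).natAbs = p ^ a * (u.1 i).natAbs := by
              simp [Int.natAbs_mul, Int.natAbs_pow]
            have e2 : ((p ^ a) • u.1 - v.1) i = ((p ^ a) • u.1) i - v.1 i := rfl
            have e3 := Nat.mul_le_mul_right (u.1 i).natAbs hq2
            rw [e2]
            omega
    · refine le_trans (le_of_eq ?_) (hB (box ι (Rs M)))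
      exact Finset.prod_coe_sort (box ι (Rs M)) (fun u => max 1 (ρ * κ' ^ (∑ i, (u i).natAbs)))

def cE {p : ℕ} [Fact p.Prime] {n s : ℕ} (k : ℕ) (f : (Fin n → ℤ) →₀ Omg p)
    (P : ((Fin n → ℤ) × (Fin s → ℤ)) →₀ Omg p) (e : Fin k × (f.support ⊕ P.support)) : Omg p :=
  Sum.elim (fun μ => f μ.1) (fun gm => P gm.1) e.2

def nE {p : ℕ} [Fact p.Prime] {n s : ℕ} (k : ℕ) (f : (Fin n → ℤ) →₀ Omg p)
    (P : ((Fin n → ℤ) × (Fin s → ℤ)) →₀ Omg p) (e : Fin k × (f.support ⊕ P.support)) :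
    Fin s ⊕ (Fin k × Fin n) → ℤ :=
  Sum.elim (Sum.elim (fun _ => 0) (fun gm => gm.1.2) e.2)
    (fun bi => if bi.1 = e.1 then Sum.elim (fun μ => μ.1 bi.2) (fun gm => gm.1.1 bi.2) e.2 else 0)

theorem prod_block {K : Type} [Field K] {n k : ℕ} (b : Fin k) (z : Fin k × Fin n → K) (g : Fin n → ℤ) :
    ∏ bi : Fin k × Fin n, z bi ^ (if bi.1 = b then g bi.2 else 0) = ∏ i, z (b, i) ^ g i := by
  rw [Fintype.prod_prod_type, Finset.prod_eq_single b]
  · simp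
  · intro b' _ hb; simp [hb]
  · simp

theorem Gsum {p : ℕ} [Fact p.Prime] {n s : ℕ} (k : ℕ) (f : (Fin n → ℤ) →₀ Omg p)
    (P : ((Fin n → ℤ) × (Fin s → ℤ)) →₀ Omg p) (y : Fin s ⊕ (Fin k × Fin n) → Omg p) :
    ∑ e, cE k f P e * ∏ i, y i ^ nE k f P e i =
      ∑ b, Gval f P (fun i => y (Sum.inr (b, i))) (fun j => y (Sum.inl j)) := by
  rw [Fintype.sum_prod_type]
  refine Finset.sum_congr rfl fun b _ => ?_
  rw [Fintype.sum_sum_type, Gval]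
  congr 1
  · rw [Finsupp.sum, ← Finset.sum_coe_sort f.support (fun μ => f μ * mon (fun i => y (Sum.inr (b, i))) μ)]
    refine Finset.sum_congr rfl fun μ _ => ?_
    simp only [cE, nE, Fintype.prod_sum_type, Sum.elim_inl, Sum.elim_inr, mon]
    rw [prod_block b (fun bi => y (Sum.inr bi)) μ.1]
    simp
  · rw [Finsupp.sum, ← Finset.sum_coe_sort P.support
      (fun gm => P gm * mon (fun i => y (Sum.inr (b, i))) gm.1 * mon (fun j => y (Sum.inl j)) gm.2)]
    refine Finset.sum_congr rfl fun μ _ => ?_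
    simp only [cE, nE, Fintype.prod_sum_type, Sum.elim_inl, Sum.elim_inr, mon]
    rw [prod_block b (fun bi => y (Sum.inr bi)) μ.1.1]
    ring

theorem mon_fix {p : ℕ} [Fact p.Prime] {n d : ℕ} (x : Fin n → Omg p) (hx : ∀ i, x i ^ p ^ d = x i) (μ : Fin n → ℤ) :
    mon x μ ^ p ^ d = mon x μ := by
  rw [mon, ← Finset.prod_pow]
  refine Finset.prod_congr rfl fun i _ => ?_
  rw [← zpow_natCast, ← zpow_mul, mul_comm, zpow_mul, zpow_natCast, hx]

theorem Gval_fix {p : ℕ} [Fact p.Prime] {n s d : ℕ} (f : (Fin n → ℤ) →₀ Omg p)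
    (P : ((Fin n → ℤ) × (Fin s → ℤ)) →₀ Omg p) (hf : ∀ μ, f μ ^ p ^ d = f μ) (hP : ∀ μ, P μ ^ p ^ d = P μ)
    (x : Fin n → Omg p) (t : Fin s → Omg p) (hx : ∀ i, x i ^ p ^ d = x i) (ht : ∀ i, t i ^ p ^ d = t i) :
    Gval f P x t ^ p ^ d = Gval f P x t := by
  rw [Gval, add_pow_char_pow, Finsupp.sum, Finsupp.sum]
  rw [(trace_add p d _ _ fun e _ => ?_).1, (trace_add p d _ _ fun e _ => ?_).1]
  · rw [mul_pow, mul_pow, hP, mon_fix x hx, mon_fix t ht]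
  · rw [mul_pow, hf, mon_fix x hx]

def assemble {p : ℕ} [Fact p.Prime] {n s k : ℕ} (t : Fin s → Omg p) (x : Fin k → Fin n → Omg p) :
    Fin s ⊕ (Fin k × Fin n) → Omg p := Sum.elim t (fun bi => x bi.1 bi.2)

theorem Ntor_eq (p a : ℕ) [Fact p.Prime] {n s : ℕ} (Θ : AddChar (ZMod p) ℂ) (ha : 1 ≤ a)
    (f : (Fin n → ℤ) →₀ Omg p) (hf : ∀ μ, f μ ^ p ^ a = f μ)
    (P : ((Fin n → ℤ) × (Fin s → ℤ)) →₀ Omg p) (hP : ∀ gm, P gm ^ p ^ a = P gm)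
    (k m : ℕ) (hm : 1 ≤ m) :
    Ntor p a Θ f P k m = (-1) ^ (n * k) *
      ∑ x ∈ Fintype.piFinset (fun _ : Fin s ⊕ (Fin k × Fin n) => XS p (p ^ (a * m))),
        Θ (traceZmod p (a * m) (∑ e, cE k f P e * ∏ i, x i ^ nE k f P e i)) := by
  have hp := (Fact.out : p.Prime)
  have hQ : 2 ≤ p ^ (a * m) := Nat.one_lt_pow (by positivity) hp.one_lt
  have hmem : ∀ {l : ℕ} (x : Fin l → Omg p), (∀ i, x i ^ p ^ (a * m) = x i ∧ x i ≠ 0) ↔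
      x ∈ Fintype.piFinset (fun _ : Fin l => XS p (p ^ (a * m))) := by
    intro l x
    simp [Fintype.mem_piFinset, mem_XS p _ hQ]
  rw [Ntor, finsum_cond_eq_sum_of_cond_iff (t := Fintype.piFinset (fun _ : Fin s => XS p (p ^ (a * m)))) _ (fun {x} _ => hmem x)]
  have h1 : ∀ t, torSum p Θ f P (a * m) t = ∑ x ∈ Fintype.piFinset (fun _ : Fin n => XS p (p ^ (a * m))),
      Θ (traceZmod p (a * m) (Gval f P x t)) := by
    intro t
    rw [torSum, finsum_cond_eq_sum_of_cond_iff _ (fun {x} _ => hmem x)]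
  have hf' : ∀ μ, f μ ^ p ^ (a * m) = f μ := fun μ => pow_fix_mul p a m _ (hf μ)
  have hP' : ∀ μ, P μ ^ p ^ (a * m) = P μ := fun μ => pow_fix_mul p a m _ (hP μ)
  have h2 : ∀ t, ((-1 : ℂ) ^ n * torSum p Θ f P (a * m) t) ^ k = (-1) ^ (n * k) *
      ∑ x ∈ Fintype.piFinset (fun _ : Fin k => Fintype.piFinset (fun _ : Fin n => XS p (p ^ (a * m)))),
        ∏ b, Θ (traceZmod p (a * m) (Gval f P (x b) t)) := by
    intro t
    rw [mul_pow, ← pow_mul, h1]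
    congr 1
    have h3 := Finset.prod_univ_sum (fun _ : Fin k => Fintype.piFinset (fun _ : Fin n => XS p (p ^ (a * m))))
      (fun _ x => Θ (traceZmod p (a * m) (Gval f P x t)))
    rw [Finset.prod_const, Finset.card_univ, Fintype.card_fin] at h3
    exact h3
  rw [Finset.sum_congr rfl fun t _ => h2 t, ← Finset.mul_sum]
  congr 1
  rw [← Finset.sum_product']
  refine Finset.sum_nbij' (fun tx => assemble tx.1 tx.2)
    (fun y => (fun j => y (Sum.inl j), fun b i => y (Sum.inr (b, i)))) ?_ ?_ ?_ ?_ ?_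
  · rintro ⟨t, x⟩ h
    simp only [Finset.mem_product, Fintype.mem_piFinset] at h
    simp only [Fintype.mem_piFinset]
    rintro (j | ⟨b, i⟩)
    · exact h.1 j
    · exact h.2 b i
  · intro y h
    simp only [Fintype.mem_piFinset] at h
    simp only [Finset.mem_product, Fintype.mem_piFinset]
    exact ⟨fun j => h _, fun b i => h _⟩
  · rintro ⟨t, x⟩ h; rfl
  · intro y h
    funext i
    rcases i with j | ⟨b, i⟩ <;> rfl
  · rintro ⟨t, x⟩ h
    simp only [Finset.mem_product, Fintype.mem_piFinset, mem_XS p _ hQ] at h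
    simp only
    rw [Gsum, (trace_add p (a * m) _ _ fun b _ => ?_).2, addChar_sum]
    · rfl
    · exact Gval_fix f P hf' hP' _ _ (fun i => (h.2 b i).1) (fun j => (h.1 j).1)

theorem isIntegral_of_powersums (M : Submodule ℤ ℂ) (hM : M.FG) {ι : Type} [Fintype ι]
    (γ : ι → ℂ) (ε : ι → ℂ) (hγ : ∀ i, γ i ≠ 0)
    (hε : ∀ i, ∑ j ∈ Finset.univ.filter (fun j => γ j = γ i), ε j ≠ 0)
    (hu : ∀ m, 1 ≤ m → ∑ i, ε i * γ i ^ m ∈ M) (i0 : ι) : IsIntegral ℤ (γ i0) := by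
  set c0 := γ i0 with hc0
  let V := Finset.univ.image γ
  let l : Polynomial ℂ := Polynomial.X * ∏ c ∈ V.erase c0, (Polynomial.X - Polynomial.C c)
  have hl0 : l.coeff 0 = 0 := by simp [l, Polynomial.mul_coeff_zero]
  have hle : ∀ i, γ i ≠ c0 → l.eval (γ i) = 0 := by
    intro i hi
    simp only [l, Polynomial.eval_mul, Polynomial.eval_prod]
    rw [Finset.prod_eq_zero (i := γ i)]
    · simp
    · simp [V, hi]
    · simp
  have hlc : l.eval c0 ≠ 0 := by
    simp only [l, Polynomial.eval_mul, Polynomial.eval_prod, Polynomial.eval_X]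
    refine mul_ne_zero (hγ i0) (Finset.prod_ne_zero_iff.mpr fun c hc => ?_)
    simp only [Polynomial.eval_sub, Polynomial.eval_X, Polynomial.eval_C]
    exact sub_ne_zero.mpr (Finset.ne_of_mem_erase hc).symm
  set w := (∑ j ∈ Finset.univ.filter (fun j => γ j = c0), ε j) * l.eval c0 with hw
  have hw0 : w ≠ 0 := mul_ne_zero (hε i0) hlc
  have key : ∀ j : ℕ, ∑ m ∈ Finset.range (l.natDegree + 1), l.coeff m * (∑ i, ε i * γ i ^ (m + j)) = w * c0 ^ j := by
    intro j
    have : ∀ m ∈ Finset.range (l.natDegree + 1), l.coeff m * (∑ i, ε i * γ i ^ (m + j)) =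
        ∑ i, ε i * γ i ^ j * (l.coeff m * γ i ^ m) := by
      intro m _
      rw [Finset.mul_sum]
      refine Finset.sum_congr rfl fun i _ => by ring
    rw [Finset.sum_congr rfl this, Finset.sum_comm]
    simp_rw [← Finset.mul_sum, ← Polynomial.eval_eq_sum_range]
    rw [hw, Finset.sum_mul, Finset.sum_mul, Finset.sum_filter]
    refine Finset.sum_congr rfl fun i _ => ?_
    split_ifs with h
    · rw [h]; ring
    · rw [hle i h, mul_zero]
  let M' : Submodule ℤ ℂ := ⨆ m ∈ Finset.range (l.natDegree + 1), M.map (LinearMap.mulLeft ℤ (l.coeff m))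
  have hM' : M'.FG := Submodule.fg_biSup _ _ fun m _ => hM.map _
  have hmem : ∀ j, w * c0 ^ j ∈ M' := by
    intro j
    rw [← key]
    refine Submodule.sum_mem _ fun m hm => ?_
    rcases Nat.eq_zero_or_pos m with h0 | h0
    · rw [h0, hl0, zero_mul]; exact Submodule.zero_mem _
    · refine Submodule.mem_iSup_of_mem m (Submodule.mem_iSup_of_mem hm ?_)
      exact ⟨_, hu (m + j) (by omega), rfl⟩
  let N : Submodule ℤ ℂ := Submodule.span ℤ (Set.range fun j : ℕ => w * c0 ^ j)
  have hNM : N ≤ M' := Submodule.span_le.mpr (by rintro _ ⟨j, rfl⟩; exact hmem j)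
  have hN : N.FG := by
    have : IsNoetherian ℤ M' := isNoetherian_of_fg_of_noetherian _ hM'
    exact Submodule.FG.of_le hM' hNM
  refine isIntegral_of_smul_mem_submodule N ?_ hN c0 ?_
  · intro h
    have : w * c0 ^ 0 ∈ N := Submodule.subset_span ⟨0, rfl⟩
    rw [h] at this
    simp [hw0] at this
  · intro x hx
    induction hx using Submodule.span_induction with
    | mem x h =>
      obtain ⟨j, rfl⟩ := h
      refine Submodule.subset_span ⟨j + 1, ?_⟩
      simp only [smul_eq_mul]; ring
    | zero => simp
    | add x y _ _ h1 h2 => rw [smul_add]; exact N.add_mem h1 h2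
    | smul r x _ h => rw [smul_comm]; exact N.smul_mem r h

theorem addChar_int (p : ℕ) [Fact p.Prime] {K : Type*} [Field K] (Θ : AddChar (ZMod p) K) (z : ZMod p) : IsIntegral ℤ (Θ z) := by
  have hp := (Fact.out : p.Prime)
  refine IsIntegral.of_pow hp.pos ?_
  rw [← AddChar.map_nsmul_eq_pow]
  simp [isIntegral_one]

theorem charMod (p : ℕ) [Fact p.Prime] (Θ : AddChar (ZMod p) ℂ) :
    ∃ A : Subalgebra ℤ ℂ, (Subalgebra.toSubmodule A).FG ∧ ∀ z, Θ z ∈ A :=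
  ⟨Algebra.adjoin ℤ (Set.range Θ), fg_adjoin_of_finite (Set.finite_range _) (by
    rintro _ ⟨z, rfl⟩; exact addChar_int p Θ z), fun z => Algebra.subset_adjoin ⟨z, rfl⟩⟩

theorem integrality (p a n s k : ℕ) [Fact p.Prime] (ha : 1 ≤ a)
    (Θ : AddChar (ZMod p) ℂ)
    (f : (Fin n → ℤ) →₀ Omg p) (hf : ∀ μ, f μ ^ p ^ a = f μ)
    (P : ((Fin n → ℤ) × (Fin s → ℤ)) →₀ Omg p) (hP : ∀ gm, P gm ^ p ^ a = P gm)
    (R S : ℕ) (α : Fin R → ℂ) (β : Fin S → ℂ)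
    (hα0 : ∀ i, α i ≠ 0) (hβ0 : ∀ j, β j ≠ 0)
    (hred : ∀ i j, α i ≠ β j)
    (hps : ∀ m : ℕ, 1 ≤ m →
      (-1 : ℂ) ^ (s + 1) * Ntor p a Θ f P k m = ∑ j, β j ^ m - ∑ i, α i ^ m) :
    (∀ i, IsIntegral ℤ (α i)) ∧ (∀ j, IsIntegral ℤ (β j)) := by
  obtain ⟨A, hA, hAΘ⟩ := charMod p Θ
  have main : ∀ i : Fin R ⊕ Fin S, IsIntegral ℤ (Sum.elim α β i) := by
    refine isIntegral_of_powersums (Subalgebra.toSubmodule A) hA (Sum.elim α β) (Sum.elim (fun _ => -1) (fun _ => 1)) ?_ ?_ ?_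
    · rintro (i | j)
      · exact hα0 i
      · exact hβ0 j
    · rintro (i | j)
      · have : ∑ j ∈ Finset.univ.filter (fun j => Sum.elim α β j = Sum.elim α β (Sum.inl i)),
            (Sum.elim (fun _ => -1) (fun _ => 1) : Fin R ⊕ Fin S → ℂ) j =
            ∑ j ∈ Finset.univ.filter (fun j => Sum.elim α β j = Sum.elim α β (Sum.inl i)), (-1 : ℂ) := by
          refine Finset.sum_congr rfl ?_
          rintro (i' | j') h
          · rfl
          · replace h := (Finset.mem_filter.mp h).2
            exact absurd h.symm (hred i j')
        rw [this, Finset.sum_const, nsmul_eq_mul]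
        refine mul_ne_zero ?_ (by norm_num)
        rw [Nat.cast_ne_zero]
        exact Finset.card_ne_zero_of_mem (a := Sum.inl i) (Finset.mem_filter.mpr ⟨Finset.mem_univ _, rfl⟩)
      · have : ∑ j' ∈ Finset.univ.filter (fun j' => Sum.elim α β j' = Sum.elim α β (Sum.inr j)),
            (Sum.elim (fun _ => -1) (fun _ => 1) : Fin R ⊕ Fin S → ℂ) j' =
            ∑ j' ∈ Finset.univ.filter (fun j' => Sum.elim α β j' = Sum.elim α β (Sum.inr j)), (1 : ℂ) := by
          refine Finset.sum_congr rfl ?_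
          rintro (i' | j') h
          · replace h := (Finset.mem_filter.mp h).2
            exact absurd h (hred i' j)
          · rfl
        rw [this, Finset.sum_const, nsmul_eq_mul]
        refine mul_ne_zero ?_ (by norm_num)
        rw [Nat.cast_ne_zero]
        exact Finset.card_ne_zero_of_mem (a := Sum.inr j) (Finset.mem_filter.mpr ⟨Finset.mem_univ _, rfl⟩)
    · intro m hm
      have : ∑ i, (Sum.elim (fun _ => -1) (fun _ => 1) : Fin R ⊕ Fin S → ℂ) i * Sum.elim α β i ^ m =
          (-1 : ℂ) ^ (s + 1) * Ntor p a Θ f P k m := by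
        rw [hps m hm, Fintype.sum_sum_type]
        simp; ring
      rw [this, Ntor_eq p a Θ ha f hf P hP k m hm, Subalgebra.mem_toSubmodule]
      have h1 : ∀ r, (-1 : ℂ) ^ r ∈ A := fun r => A.pow_mem (A.neg_mem A.one_mem) r
      exact A.mul_mem (h1 _) (A.mul_mem (h1 _) (A.sum_mem fun x _ => hAΘ _))
  exact ⟨fun i => main (Sum.inl i), fun j => main (Sum.inr j)⟩

theorem fac_bound (p : ℕ) [Fact p.Prime] (r : ℕ) : 1 ≤ ‖(r.factorial : ℂ_[p])‖ * (p:ℝ) ^ r := by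
  have hp := (Fact.out : p.Prime)
  have hp1 : (1:ℝ) < p := by exact_mod_cast hp.one_lt
  rcases Nat.eq_zero_or_pos r with h | h
  · simp [h]
  have h1 := padic_norm_fac p r (by omega)
  have h2 : ‖(r.factorial : ℂ_[p])‖ = ‖(r.factorial : ℚ_[p])‖ := by
    rw [← PadicComplex.norm_extends' p (r.factorial : ℚ_[p])]
    norm_cast
  have h3 : (r.factorial : ℚ_[p]) ≠ 0 := by exact_mod_cast r.factorial_ne_zero
  have h4 : 0 < ‖(r.factorial : ℚ_[p])‖ := norm_pos_iff.mpr h3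
  rw [norm_div, norm_pow, Padic.norm_p, div_le_iff₀ h4] at h1
  rw [h2]
  have h5 : ((p:ℝ)⁻¹) ^ r * (p:ℝ) ^ r = 1 := by rw [← mul_pow, inv_mul_cancel₀ (by positivity), one_pow]
  have h6 : (p:ℝ)⁻¹ ≤ 1 := inv_le_one_of_one_le₀ hp1.le
  have h7 : ((p:ℝ)⁻¹) ^ r ≤ ‖(r.factorial : ℚ_[p])‖ := h1.trans (by nlinarith)
  calc (1:ℝ) = ((p:ℝ)⁻¹) ^ r * (p:ℝ) ^ r := h5.symm
    _ ≤ _ := by gcongr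

theorem exists_lift (p : ℕ) [Fact p.Prime] : Nonempty (algebraicClosure ℚ ℂ →+* ℂ_[p]) := by
  have : Algebra.IsAlgebraic ℚ (algebraicClosure ℚ ℂ) := algebraicClosure.isAlgebraic ℚ ℂ
  exact ⟨(IsAlgClosed.lift (R := ℚ) (S := algebraicClosure ℚ ℂ) (M := ℂ_[p])).toRingHom⟩

theorem pairing (p a n s k : ℕ) [Fact p.Prime] (ha : 1 ≤ a)
    (Θ : AddChar (ZMod p) ℂ)
    (f : (Fin n → ℤ) →₀ Omg p) (hf : ∀ μ, f μ ^ p ^ a = f μ)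
    (P : ((Fin n → ℤ) × (Fin s → ℤ)) →₀ Omg p) (hP : ∀ gm, P gm ^ p ^ a = P gm)
    (R S : ℕ) (α : Fin R → ℂ) (β : Fin S → ℂ)
    (hβ0 : ∀ j, β j ≠ 0)
    (hαi : ∀ i, IsIntegral ℤ (α i)) (hβi : ∀ i, IsIntegral ℤ (β i))
    (hred : ∀ i j, α i ≠ β j)
    (hps : ∀ m : ℕ, 1 ≤ m →
      (-1 : ℂ) ^ (s + 1) * Ntor p a Θ f P k m = ∑ j, β j ^ m - ∑ i, α i ^ m) (j : Fin S) :
    ∃ (i : Fin R) (mj : ℕ), 0 < mj ∧ β j = ((p : ℂ) ^ a) ^ mj * α i := by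
  have hp := (Fact.out : p.Prime)
  obtain ⟨σ⟩ := exists_lift p
  let Qb := algebraicClosure ℚ ℂ
  have hint : ∀ z : ℂ, IsIntegral ℤ z → z ∈ Qb := fun z hz =>
    mem_algebraicClosure_iff.mpr (hz.tower_top (A := ℚ)).isAlgebraic
  have hQint : ∀ z : Qb, IsIntegral ℤ (z : ℂ) → IsIntegral ℤ z := fun z hz =>
    (isIntegral_algHom_iff (Qb.val.restrictScalars ℤ) Subtype.val_injective).mp hz
  have hinj : Function.Injective (fun z : Qb => (z : ℂ)) := Subtype.val_injective
  let α' : Fin R → Qb := fun i => ⟨α i, hint _ (hαi i)⟩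
  let β' : Fin S → Qb := fun i => ⟨β i, hint _ (hβi i)⟩
  let Θ' : AddChar (ZMod p) Qb :=
    { toFun := fun z => ⟨Θ z, hint _ (addChar_int p Θ z)⟩
      map_zero_eq_one' := by apply hinj; simp
      map_add_eq_mul' := by intro x y; apply hinj; simp [AddChar.map_add_eq_mul] }
  let χ : AddChar (ZMod p) ℂ_[p] := (σ : Qb →* ℂ_[p]).compAddChar Θ'
  have hc : ∀ e, cE k f P e ^ p ^ a = cE k f P e := by
    rintro ⟨b, μ | g⟩
    · exact hf _
    · exact hP _
  obtain ⟨v, A, hA, hv, hent⟩ := trace_entire p a ha χ (cE k f P) hc (nE k f P)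
  have hq1 : ‖((p:ℂ_[p]) ^ a)‖ < 1 := by
    rw [norm_pow]
    have h0 : ‖(p:ℂ_[p])‖ < 1 := by
      have := PadicComplex.norm_extends' p (p : ℚ_[p])
      rw [Padic.norm_p] at this
      have h1 : ‖(p:ℂ_[p])‖ = (p:ℝ)⁻¹ := by rw [← this]; norm_cast
      rw [h1]
      exact inv_lt_one_of_one_lt₀ (by exact_mod_cast hp.one_lt)
    exact pow_lt_one₀ (norm_nonneg _) h0 (Nat.one_le_iff_ne_zero.mp ha)
  have hp0 : ((p:ℂ_[p]) ^ a) ≠ 0 := pow_ne_zero _ (by exact_mod_cast hp.ne_zero)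
  have hcard : Fintype.card (Fin s ⊕ (Fin k × Fin n)) = s + k * n := by simp
  have heq : ∀ m, 1 ≤ m → ∑ i, σ (α' i) ^ m - ∑ j, σ (β' j) ^ m = (1 - ((p:ℂ_[p]) ^ a) ^ m) ^ (s + k * n) * v m := by
    intro m hm
    have h1 : ∑ i, α' i ^ m - ∑ j, β' j ^ m = (-1) ^ (s + k * n) *
      ∑ x ∈ Fintype.piFinset (fun _ : Fin s ⊕ (Fin k × Fin n) => XS p (p ^ (a * m))),
        Θ' (traceZmod p (a * m) (∑ e, cE k f P e * ∏ i, x i ^ nE k f P e i)) := by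
      apply hinj
      have h2 := hps m hm
      rw [Ntor_eq p a Θ ha f hf P hP k m hm] at h2
      simp only
      push_cast
      have h3 : ∀ z, ((Θ' z : Qb) : ℂ) = Θ z := fun z => rfl
      have h4 : ∑ i, α i ^ m - ∑ j, β j ^ m = - (∑ j, β j ^ m - ∑ i, α i ^ m) := by ring
      simp only [h3]
      change ∑ i, α i ^ m - ∑ j, β j ^ m = _
      rw [h4, ← h2]
      ring
    have h5 := congrArg σ h1
    rw [map_sub, map_sum, map_sum, map_mul, map_sum] at h5
    simp only [map_pow, map_neg, map_one] at h5
    rw [h5]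
    have h6 := hv m hm
    rw [hcard] at h6
    change (-1) ^ (s + k * n) * ∑ x ∈ _, χ _ = _
    rw [h6, ← mul_assoc, ← mul_pow]
    congr 2
    ring
  have hb : ∀ j, σ (β' j) ≠ 0 := by
    intro j h
    have h1 : β' j = 0 := σ.injective (by simpa using h)
    exact hβ0 j (congrArg (fun z : Qb => (z : ℂ)) h1)
  have hr : ∀ i j, σ (α' i) ≠ σ (β' j) := by
    intro i j h
    have h1 : α' i = β' j := σ.injective h
    exact hred i j (congrArg (fun z : Qb => (z : ℂ)) h1)
  obtain ⟨i, mj, hmj, h⟩ := pole_lemma ((p:ℂ_[p]) ^ a) hp0 hq1 (s + k * n) p (by exact_mod_cast hp.pos) (fac_bound p) v A hA hent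
    R S (fun i => σ (α' i)) (fun j => σ (β' j)) hb (fun i => int_norm_le _ (map_isIntegral_int σ (hQint _ (hαi i))))
      (fun i => int_norm_le _ (map_isIntegral_int σ (hQint _ (hβi i)))) hr heq j
  refine ⟨i, mj, hmj, ?_⟩
  have h1 : β' j = ((p : Qb) ^ a) ^ mj * α' i := by
    apply σ.injective
    rw [h]; simp
  have h2 := congrArg (fun z : Qb => (z : ℂ)) h1
  simpa using h2

/-- integrality of the reciprocal zeros/poles and pole-zero pairing:
each reciprocal pole is `q^{m_j}` times some reciprocal zero, `m_j ≥ 1`. -/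
theorem tensor_power_integral_and_pairing
    (p a n s k : ℕ) [Fact p.Prime] (ha : 1 ≤ a) (hn : 1 ≤ n) (hs : 1 ≤ s) (hk : 1 ≤ k)
    (ζ : ℂ) (hζ : IsPrimitiveRoot ζ p)
    (Θ : AddChar (ZMod p) ℂ) (hΘ : Θ ≠ 1) (hΘval : ∀ z, Θ z ∈ cyclo ζ)
    (f : (Fin n → ℤ) →₀ Omg p) (hf : ∀ μ, f μ ^ p ^ a = f μ)
    (P : ((Fin n → ℤ) × (Fin s → ℤ)) →₀ Omg p) (hP : ∀ gm, P gm ^ p ^ a = P gm)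
    (hdim : Submodule.span ℝ (NewtonPoly f) = ⊤)
    (hnd : Nondeg f)
    (hwt : ∀ gm ∈ P.support, gauge (NewtonPoly f) (toR gm.1) < 1)
    (hΓ : relPoly f P ≠ {0})
    (R S : ℕ) (α : Fin R → ℂ) (β : Fin S → ℂ)
    (hα0 : ∀ i, α i ≠ 0) (hβ0 : ∀ j, β j ≠ 0)
    (hred : ∀ i j, α i ≠ β j)
    (hps : ∀ m : ℕ, 1 ≤ m →
      (-1 : ℂ) ^ (s + 1) * Ntor p a Θ f P k m = ∑ j, β j ^ m - ∑ i, α i ^ m) :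
    (∀ i, IsIntegral ℤ (α i)) ∧ (∀ j, IsIntegral ℤ (β j)) ∧
      ∀ j, ∃ (i : Fin R) (mj : ℕ), 0 < mj ∧ β j = ((p : ℂ) ^ a) ^ mj * α i := by
  obtain ⟨h1, h2⟩ := integrality p a n s k ha Θ f hf P hP R S α β hα0 hβ0 hred hps
  exact ⟨h1, h2, fun j => pairing p a n s k ha Θ f hf P hP R S α β hβ0 h1 h2 hred hps j⟩

end HS
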